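/- Let P be a proper real-rational n×n transfer matrix that is negative imaginary (NI) with no poles at the origin, and let C be strictly negative imaginary (SNI). Then the positive feedback interconnection [P,C] is stable if and only if: (a) I − P(∞)C(∞) is nonsingular; (b) the largest eigenvalue of (I − P(∞)C(∞))^{-1}(P(∞)C(0) − I) is negative; and (c) the largest eigenvalue of (I − C(0)P(∞))^{-1}(C(0)P(0) − I) is negative. -/

import Mathlib

open Matrix Polynomial Filter Topology
open scoped ComplexOrder

noncomputable section

namespace NIControl

/-- Evaluate a real-rational function at a complex point (junk value at poles). -/
def evalC (f : RatFunc ℝ) (s : ℂ) : ℂ :=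
  f.eval (algebraMap ℝ ℂ) s

/-- `s` is a pole of the real-rational function `f`
(the reduced denominator vanishes at `s`). -/
def IsPoleAt (f : RatFunc ℝ) (s : ℂ) : Prop :=
  f.denom.eval₂ (algebraMap ℝ ℂ) s = 0

variable {n : ℕ}

/-- Pointwise evaluation of a real-rational transfer matrix at a complex point. -/
def evalM (G : Matrix (Fin n) (Fin n) (RatFunc ℝ)) (s : ℂ) : Matrix (Fin n) (Fin n) ℂ :=
  Matrix.of fun i j => evalC (G i j) s

/-- Pointwise evaluation of a real-rational transfer matrix at a real point. -/
def evalR (G : Matrix (Fin n) (Fin n) (RatFunc ℝ)) (x : ℝ) : Matrix (Fin n) (Fin n) ℝ :=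
  Matrix.of fun i j => (G i j).eval (RingHom.id ℝ) x

/-- Value at `s = ∞` of a proper real-rational function. -/
def atInfinity (f : RatFunc ℝ) : ℝ :=
  if f.num.degree = f.denom.degree then f.num.leadingCoeff / f.denom.leadingCoeff else 0

/-- The instantaneous gain `G(∞)` of a proper real-rational transfer matrix. -/
def evalInf (G : Matrix (Fin n) (Fin n) (RatFunc ℝ)) : Matrix (Fin n) (Fin n) ℝ :=
  Matrix.of fun i j => atInfinity (G i j)

/-- The matrix `G` has a pole at `s`. -/
def HasPole (G : Matrix (Fin n) (Fin n) (RatFunc ℝ)) (s : ℂ) : Prop :=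
  ∃ i j, IsPoleAt (G i j) s

/-- All entries of `G` are proper rational functions. -/
def Proper (G : Matrix (Fin n) (Fin n) (RatFunc ℝ)) : Prop :=
  ∀ i j, (G i j).num.degree ≤ (G i j).denom.degree

/-- All entries of `G` are strictly proper rational functions. -/
def StrictlyProper (G : Matrix (Fin n) (Fin n) (RatFunc ℝ)) : Prop :=
  ∀ i j, (G i j).num.degree < (G i j).denom.degree

/-- The pole of `G` at the origin (if any) is at most simple. -/
def NoDoubleOriginPole (G : Matrix (Fin n) (Fin n) (RatFunc ℝ)) : Prop :=
  ∀ i j, (G i j).denom.rootMultiplicity 0 ≤ 1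

/-- Membership in `RH∞`: proper and no poles in the closed right-half complex plane. -/
def MemRHinf {m : Type*} [Fintype m] (G : Matrix m m (RatFunc ℝ)) : Prop :=
  (∀ i j, (G i j).num.degree ≤ (G i j).denom.degree) ∧
  ∀ s : ℂ, 0 ≤ s.re → ∀ i j, ¬ IsPoleAt (G i j) s

/-- The point `jω` on the imaginary axis. -/
def jw (ω : ℝ) : ℂ := Complex.I * (ω : ℂ)

/-- The negative-imaginary frequency kernel `j (M − M*)`. -/
def niKer (M : Matrix (Fin n) (Fin n) ℂ) : Matrix (Fin n) (Fin n) ℂ :=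
  Complex.I • (M - Mᴴ)

/-- Negative imaginary (NI) real-rational transfer matrix. -/
def IsNI (G : Matrix (Fin n) (Fin n) (RatFunc ℝ)) : Prop :=
  Proper G ∧
  (∀ s : ℂ, 0 < s.re → ¬ HasPole G s) ∧
  (∀ ω : ℝ, 0 < ω → ¬ HasPole G (jw ω) → (niKer (evalM G (jw ω))).PosSemidef) ∧
  (∀ ω : ℝ, 0 < ω → HasPole G (jw ω) →
    ∃ R : Matrix (Fin n) (Fin n) ℂ, R.PosSemidef ∧
      Tendsto (fun s : ℂ => (s - jw ω) • Complex.I • evalM G s) (𝓝[≠] jw ω) (𝓝 R)) ∧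
  (HasPole G 0 →
    (∀ k : ℕ, 3 ≤ k → Tendsto (fun s : ℂ => s ^ k • evalM G s) (𝓝[≠] 0) (𝓝 0)) ∧
    ∃ R : Matrix (Fin n) (Fin n) ℂ, R.PosSemidef ∧
      Tendsto (fun s : ℂ => s ^ 2 • evalM G s) (𝓝[≠] 0) (𝓝 R))

/-- Strictly negative imaginary (SNI) real-rational transfer matrix. -/
def IsSNI (G : Matrix (Fin n) (Fin n) (RatFunc ℝ)) : Prop :=
  MemRHinf G ∧ ∀ ω : ℝ, 0 < ω → (niKer (evalM G (jw ω))).PosDef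

/-- Positive real (passive) real-rational transfer matrix. -/
def IsPositiveReal (G : Matrix (Fin n) (Fin n) (RatFunc ℝ)) : Prop :=
  MemRHinf G ∧ ∀ ω : ℝ, 0 ≤ ω → (evalM G (jw ω) + (evalM G (jw ω))ᴴ).PosSemidef

/-- Output strictly passive real-rational transfer matrix. -/
def IsOSP (G : Matrix (Fin n) (Fin n) (RatFunc ℝ)) : Prop :=
  MemRHinf G ∧ ∃ ε : ℝ, 0 < ε ∧ ∀ ω : ℝ, 0 ≤ ω →
    (evalM G (jw ω) + (evalM G (jw ω))ᴴ -
      (ε : ℂ) • ((evalM G (jw ω))ᴴ * evalM G (jw ω))).PosSemidef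

/-- Stability of the positive feedback interconnection `[P, C]`:
`[I; C] (I − P C)⁻¹ [I, P] ∈ RH∞`. -/
def FeedbackStable (P C : Matrix (Fin n) (Fin n) (RatFunc ℝ)) : Prop :=
  ((1 : Matrix (Fin n) (Fin n) (RatFunc ℝ)) - P * C).det ≠ 0 ∧
  MemRHinf (Matrix.fromBlocks
    (1 - P * C)⁻¹ ((1 - P * C)⁻¹ * P)
    (C * (1 - P * C)⁻¹) (C * (1 - P * C)⁻¹ * P))

/-- All eigenvalues of the complex matrix `M` are real and less than `c`. -/
def eigsRealAndLT (M : Matrix (Fin n) (Fin n) ℂ) (c : ℝ) : Prop :=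
  ∀ μ ∈ spectrum ℂ M, μ.im = 0 ∧ μ.re < c

/-- The (real) eigenvalues of the real matrix `M` are all real and its largest
eigenvalue is less than `c`. -/
def maxEigLT (M : Matrix (Fin n) (Fin n) ℝ) (c : ℝ) : Prop :=
  eigsRealAndLT (M.map (Complex.ofReal)) c

/-- Loewner order `A ≤ B` on real matrices. -/
def LoewnerLE (A B : Matrix (Fin n) (Fin n) ℝ) : Prop := (B - A).PosSemidef

/-- Strict Loewner order `A < B` on real matrices. -/
def LoewnerLT (A B : Matrix (Fin n) (Fin n) ℝ) : Prop := (B - A).PosDef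

/-!
Stability of `[P, C]` is the membership in `RH∞` of the inverse of the loop matrix
`L = [[P, -1], [-1, C]]`, which is again negative imaginary. If `L⁻¹ ∈ RH∞`, then `-L⁻¹` is
negative imaginary as well, and since a negative imaginary `G` without a pole at the origin
satisfies `G(∞) ≤ G(0)`, it follows that `L(0)⁻¹ ≤ L(∞)⁻¹`. Conversely, a kernel vector `z` of
`L(s)` with `Re s > 0` yields `u* L(∞) u ≤ (u + z)* L(0) (u + z)` for all `u`, by interpolating
between `u` and `u + z` inside the quadratic form of `L`; together with `L(0)⁻¹ ≤ L(∞)⁻¹` this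
forces `z = 0`. On the imaginary axis the strictness of `C` excludes poles of `L⁻¹`. Finally, since
`L(∞) ≤ L(0)` are Hermitian, the inequality `L(0)⁻¹ ≤ L(∞)⁻¹` holds exactly when no pair on the path
from `(P(∞), C(∞))` through `(P(∞), C(0))` to `(P(0), C(0))` gives a singular loop matrix, and
singularity along each of the two segments is read off from the eigenvalues in (b) and (c).
-/

/-! ### Values and poles of real-rational functions -/

section RationalFunction

variable {f g : RatFunc ℝ} {s : ℂ}

lemma evalC_eq_aeval_div_aeval (f : RatFunc ℝ) (s : ℂ) :
    evalC f s = aeval s f.num / aeval s f.denom := rfl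

lemma isPoleAt_iff_aeval_denom_eq_zero : IsPoleAt f s ↔ aeval s f.denom = 0 := Iff.rfl

lemma evalC_conj (f : RatFunc ℝ) (s : ℂ) :
    evalC f ((starRingEnd ℂ) s) = (starRingEnd ℂ) (evalC f s) := by
  rw [evalC_eq_aeval_div_aeval, evalC_eq_aeval_div_aeval, aeval_conj, aeval_conj, map_div₀]

lemma isPoleAt_conj : IsPoleAt f ((starRingEnd ℂ) s) ↔ IsPoleAt f s := by
  rw [isPoleAt_iff_aeval_denom_eq_zero, isPoleAt_iff_aeval_denom_eq_zero, aeval_conj,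
    map_eq_zero]

lemma evalC_ofReal (f : RatFunc ℝ) (x : ℝ) :
    evalC f (x : ℂ) = ((f.num.eval x / f.denom.eval x : ℝ) : ℂ) := by
  have aeval_ofReal (p : ℝ[X]) : aeval (x : ℂ) p = ((p.eval x : ℝ) : ℂ) := by
    simpa using aeval_algebraMap_apply ℂ x p
  rw [evalC_eq_aeval_div_aeval, aeval_ofReal, aeval_ofReal, Complex.ofReal_div]

lemma differentiableAt_evalC (h : ¬ IsPoleAt f s) : DifferentiableAt ℂ (evalC f) s :=
  (f.num.differentiable_aeval s).div (f.denom.differentiable_aeval s) h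

lemma finite_setOf_isPoleAt (f : RatFunc ℝ) : {s : ℂ | IsPoleAt f s}.Finite :=
  (rootSet_finite f.denom ℂ).subset fun _ hs => mem_rootSet.2 ⟨f.denom_ne_zero, hs⟩

lemma not_isPoleAt_mul (hf : ¬ IsPoleAt f s) (hg : ¬ IsPoleAt g s) : ¬ IsPoleAt (f * g) s := by
  intro h
  have := eval₂_eq_zero_of_dvd_of_eval₂_eq_zero (algebraMap ℝ ℂ) s (RatFunc.denom_mul_dvd f g) h
  rw [eval₂_mul] at this
  exact (mul_eq_zero.1 this).elim hf hg

lemma not_isPoleAt_add (hf : ¬ IsPoleAt f s) (hg : ¬ IsPoleAt g s) : ¬ IsPoleAt (f + g) s := by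
  intro h
  have := eval₂_eq_zero_of_dvd_of_eval₂_eq_zero (algebraMap ℝ ℂ) s (RatFunc.denom_add_dvd f g) h
  rw [eval₂_mul] at this
  exact (mul_eq_zero.1 this).elim hf hg

lemma not_isPoleAt_inv (h : evalC f s ≠ 0) : ¬ IsPoleAt f⁻¹ s := by
  have hf : f ≠ 0 := by rintro rfl; exact h (RatFunc.eval_zero _ _)
  intro hp
  have hnum : aeval s f.num = 0 :=
    eval₂_eq_zero_of_dvd_of_eval₂_eq_zero (algebraMap ℝ ℂ) s (RatFunc.denom_inv_dvd hf) hp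
  exact h (by rw [evalC_eq_aeval_div_aeval, hnum, zero_div])

/-- The real-rational functions that are regular at `s`. -/
def regAt (s : ℂ) : Subalgebra ℝ (RatFunc ℝ) where
  carrier := {f | ¬ IsPoleAt f s}
  mul_mem' := not_isPoleAt_mul
  add_mem' := not_isPoleAt_add
  algebraMap_mem' r := by
    simp [isPoleAt_iff_aeval_denom_eq_zero, RatFunc.algebraMap_eq_C]

/-- Evaluation at `s`, a ring homomorphism on the functions regular at `s`. -/
def evalHom (s : ℂ) : regAt s →+* ℂ where
  toFun f := evalC f.1 s
  map_one' := RatFunc.eval_one _ _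
  map_zero' := RatFunc.eval_zero _ _
  map_mul' f g := RatFunc.eval_mul _ _ f.2 g.2
  map_add' f g := RatFunc.eval_add _ _ f.2 g.2

instance (s : ℂ) : IsLocalHom (evalHom s) where
  map_nonunit f hf := by
    have hval : evalC f.1 s ≠ 0 := hf.ne_zero
    have hne : f.1 ≠ 0 := by rintro h; exact hval (h ▸ RatFunc.eval_zero _ _)
    exact .of_mul_eq_one ⟨f.1⁻¹, not_isPoleAt_inv hval⟩ (Subtype.ext (mul_inv_cancel₀ hne))

lemma not_isPoleAt_of_isBigO_one {a : ℂ} {l : Filter ℂ} [l.NeBot] (hl : l ≤ 𝓝[≠] a)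
    (hbdd : evalC f =O[l] (1 : ℂ → ℂ)) : ¬ IsPoleAt f a := by
  intro hp
  have hla : l ≤ 𝓝 a := hl.trans nhdsWithin_le_nhds
  have hdenom : Tendsto (fun s : ℂ => aeval s f.denom) l (𝓝 0) := by
    simpa only [isPoleAt_iff_aeval_denom_eq_zero.1 hp] using
      (f.denom.continuous_aeval.tendsto a).mono_left hla
  have hregular : ∀ᶠ s in l, ¬ IsPoleAt f s :=
    (hl.trans (nhdsNE_le_cofinite a)) (finite_setOf_isPoleAt f).compl_mem_cofinite
  have hnum : Tendsto (fun s : ℂ => aeval s f.num) l (𝓝 0) := by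
    have hprod : Tendsto (fun s => evalC f s * aeval s f.denom) l (𝓝 0) := by
      refine Asymptotics.IsBigO.trans_tendsto (g'' := fun s : ℂ => aeval s f.denom) ?_ hdenom
      simpa using hbdd.mul (Asymptotics.isBigO_refl (fun s : ℂ => aeval s f.denom) l)
    exact hprod.congr' (hregular.mono fun s hs => div_mul_cancel₀ _ hs)
  have hnum_a : aeval a f.num = 0 :=
    tendsto_nhds_unique ((f.num.continuous_aeval.tendsto a).mono_left hla) hnum
  exact (aeval_ne_zero_of_isCoprime f.isCoprime_num_denom a).elim (· hnum_a) (· hp)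

end RationalFunction

/-! ### Values at infinity -/

section Infinity

variable {f g : RatFunc ℝ}

lemma tendsto_evalC_cobounded (h : f.num.degree ≤ f.denom.degree) :
    Tendsto (evalC f) (Bornology.cobounded ℂ) (𝓝 (atInfinity f : ℂ)) := by
  have hdiv : evalC f = fun s => (f.num.map (algebraMap ℝ ℂ)).eval s /
      (f.denom.map (algebraMap ℝ ℂ)).eval s := by
    funext s; simp only [eval_map_algebraMap, evalC_eq_aeval_div_aeval]
  rw [hdiv, atInfinity]
  split_ifs with hdeg
  · refine (isEquivalent_cobounded_leading_monomial.div
      isEquivalent_cobounded_leading_monomial).symm.tendsto_nhds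
      (tendsto_const_nhds.congr' ?_)
    have hne : ∀ᶠ s : ℂ in Bornology.cobounded ℂ, s ≠ 0 :=
      Bornology.isBounded_singleton (x := (0 : ℂ))
    filter_upwards [hne] with s hs
    simp only [Pi.div_apply, natDegree_map, leadingCoeff_map, natDegree_eq_of_degree_eq hdeg]
    rw [mul_div_mul_right _ _ (pow_ne_zero _ hs)]
    simp
  · have hlt := lt_of_le_of_ne h hdeg
    simpa using (isLittleO_cobounded_of_degree_lt (R := ℂ) (P := f.num.map (algebraMap ℝ ℂ))
      (Q := f.denom.map (algebraMap ℝ ℂ)) (by simpa using hlt)).tendsto_div_nhds_zero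

lemma tendsto_ofReal_atTop_cobounded :
    Tendsto (fun x : ℝ => (x : ℂ)) atTop (Bornology.cobounded ℂ) := by
  rw [← tendsto_norm_atTop_iff_cobounded]
  simpa only [Complex.norm_real] using tendsto_norm_atTop_atTop

lemma degree_num_le_degree_denom_of_isBigO_one
    (hbdd : evalC f =O[Bornology.cobounded ℂ] (1 : ℂ → ℂ)) :
    f.num.degree ≤ f.denom.degree := by
  by_contra! h
  obtain ⟨B, hB⟩ := hbdd.bound
  have hlarge := (abs_div_tendsto_atTop_atTop_of_degree_gt _ _ h
    f.denom_ne_zero).eventually_gt_atTop B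
  obtain ⟨x, hle, hgt⟩ := ((tendsto_ofReal_atTop_cobounded.eventually hB).and hlarge).exists
  simp only [evalC_ofReal, Complex.norm_real, Real.norm_eq_abs, Pi.one_apply, norm_one,
    mul_one] at hle
  exact hle.not_gt hgt

lemma eventually_not_isPoleAt_cobounded (f : RatFunc ℝ) :
    ∀ᶠ s in Bornology.cobounded ℂ, ¬ IsPoleAt f s :=
  (finite_setOf_isPoleAt f).isBounded

lemma tendsto_evalC_mul_cobounded (hf : f.num.degree ≤ f.denom.degree)
    (hg : g.num.degree ≤ g.denom.degree) :
    Tendsto (evalC (f * g)) (Bornology.cobounded ℂ) (𝓝 (atInfinity f * atInfinity g)) := by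
  refine ((tendsto_evalC_cobounded hf).mul (tendsto_evalC_cobounded hg)).congr' ?_
  filter_upwards [eventually_not_isPoleAt_cobounded f, eventually_not_isPoleAt_cobounded g]
    with s hfs hgs
  exact (RatFunc.eval_mul _ _ hfs hgs).symm

lemma tendsto_evalC_add_cobounded (hf : f.num.degree ≤ f.denom.degree)
    (hg : g.num.degree ≤ g.denom.degree) :
    Tendsto (evalC (f + g)) (Bornology.cobounded ℂ) (𝓝 (atInfinity f + atInfinity g)) := by
  refine ((tendsto_evalC_cobounded hf).add (tendsto_evalC_cobounded hg)).congr' ?_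
  filter_upwards [eventually_not_isPoleAt_cobounded f, eventually_not_isPoleAt_cobounded g]
    with s hfs hgs
  exact (RatFunc.eval_add _ _ hfs hgs).symm

/-- The proper real-rational functions. -/
def properFunctions : Subalgebra ℝ (RatFunc ℝ) where
  carrier := {f | f.num.degree ≤ f.denom.degree}
  mul_mem' hf hg := degree_num_le_degree_denom_of_isBigO_one
    ((tendsto_evalC_mul_cobounded hf hg).isBigO_one ℂ)
  add_mem' hf hg := degree_num_le_degree_denom_of_isBigO_one
    ((tendsto_evalC_add_cobounded hf hg).isBigO_one ℂ)
  algebraMap_mem' r := by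
    simp [RatFunc.algebraMap_eq_C, degree_C_le]

/-- Evaluation at infinity, a ring homomorphism on the proper functions. -/
def evalInfHom : properFunctions →+* ℂ where
  toFun f := atInfinity f.1
  map_one' := by simp [atInfinity]
  map_zero' := by simp [atInfinity]
  map_mul' f g := tendsto_nhds_unique (tendsto_evalC_cobounded (f * g).2)
    (tendsto_evalC_mul_cobounded f.2 g.2)
  map_add' f g := tendsto_nhds_unique (tendsto_evalC_cobounded (f + g).2)
    (tendsto_evalC_add_cobounded f.2 g.2)

instance : IsLocalHom evalInfHom where
  map_nonunit f hf := by
    have hval : atInfinity f.1 ≠ 0 := fun h => hf.ne_zero (Complex.ofReal_eq_zero.2 h)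
    have hdeg : f.1.num.degree = f.1.denom.degree := by
      by_contra h; exact hval (if_neg h)
    have hne : f.1 ≠ 0 := by rintro h; exact hval (by simp [h, atInfinity])
    have hinv : f.1⁻¹.num.degree ≤ f.1⁻¹.denom.degree := by
      rw [degree_eq_degree_of_associated (RatFunc.associated_num_inv hne),
        degree_eq_degree_of_associated (RatFunc.associated_denom_inv hne), hdeg]
    exact .of_mul_eq_one ⟨f.1⁻¹, hinv⟩ (Subtype.ext (mul_inv_cancel₀ hne))

end Infinity

/-! ### Transfer matrices -/

section MapMatrix

variable {m R S K L : Type*} [Fintype m] [DecidableEq m] [CommRing R] [CommRing S]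
  [Field K] [Field L]

lemma mapMatrix_injective {φ : R →+* S} (hφ : Function.Injective φ) :
    Function.Injective (φ.mapMatrix : Matrix m m R →+* Matrix m m S) :=
  Matrix.map_injective hφ

lemma mapMatrix_nonsing_inv (φ : R →+* S) {A : Matrix m m R} (hA : IsUnit A) :
    φ.mapMatrix A⁻¹ = (φ.mapMatrix A)⁻¹ := by
  refine (Matrix.inv_eq_left_inv ?_).symm
  rw [← map_mul, Matrix.nonsing_inv_mul A ((isUnit_iff_isUnit_det A).1 hA), map_one]

lemma isUnit_of_isUnit_mapMatrix (φ : R →+* S) [IsLocalHom φ] {A : Matrix m m R}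
    (h : IsUnit (φ.mapMatrix A)) : IsUnit A := by
  rw [isUnit_iff_isUnit_det, ← RingHom.map_det] at h
  exact (isUnit_iff_isUnit_det A).2 (isUnit_of_map_unit φ _ h)

lemma mapMatrix_inv (f : K →+* L) (A : Matrix m m K) :
    f.mapMatrix A⁻¹ = (f.mapMatrix A)⁻¹ := by
  rw [inv_def, inv_def, ← RingHom.map_det, ← RingHom.map_adjugate]
  ext i j
  simp

lemma isUnit_mapMatrix_iff (f : K →+* L) {A : Matrix m m K} :
    IsUnit (f.mapMatrix A) ↔ A.det ≠ 0 := by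
  rw [isUnit_iff_isUnit_det, ← RingHom.map_det, isUnit_iff_ne_zero, _root_.map_ne_zero]

end MapMatrix

section TransferMatrix

variable {G H : Matrix (Fin n) (Fin n) (RatFunc ℝ)} {s : ℂ}

/-- The value `G(∞)` as a complex matrix. -/
def evalTop (G : Matrix (Fin n) (Fin n) (RatFunc ℝ)) : Matrix (Fin n) (Fin n) ℂ :=
  (evalInf G).map Complex.ofReal

lemma exists_regAt_lift (h : ¬ HasPole G s) :
    ∃ A : Matrix (Fin n) (Fin n) (regAt s), (algebraMap (regAt s) (RatFunc ℝ)).mapMatrix A = G :=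
  ⟨.of fun i j => ⟨G i j, fun hp => h ⟨i, j, hp⟩⟩, rfl⟩

lemma not_hasPole_regAt_lift (A : Matrix (Fin n) (Fin n) (regAt s)) :
    ¬ HasPole ((algebraMap (regAt s) (RatFunc ℝ)).mapMatrix A) s :=
  fun ⟨i, j, h⟩ => (A i j).2 h

lemma evalM_regAt_lift (A : Matrix (Fin n) (Fin n) (regAt s)) :
    evalM ((algebraMap (regAt s) (RatFunc ℝ)).mapMatrix A) s = (evalHom s).mapMatrix A := rfl

lemma exists_properFunctions_lift (h : Proper G) :
    ∃ A : Matrix (Fin n) (Fin n) properFunctions,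
      (algebraMap properFunctions (RatFunc ℝ)).mapMatrix A = G :=
  ⟨.of fun i j => ⟨G i j, h i j⟩, rfl⟩

lemma proper_properFunctions_lift (A : Matrix (Fin n) (Fin n) properFunctions) :
    Proper ((algebraMap properFunctions (RatFunc ℝ)).mapMatrix A) :=
  fun i j => (A i j).2

lemma evalTop_properFunctions_lift (A : Matrix (Fin n) (Fin n) properFunctions) :
    evalTop ((algebraMap properFunctions (RatFunc ℝ)).mapMatrix A) = evalInfHom.mapMatrix A := rfl

lemma not_hasPole_neg (hG : ¬ HasPole G s) : ¬ HasPole (-G) s := by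
  obtain ⟨A, rfl⟩ := exists_regAt_lift hG
  simpa only [map_neg] using not_hasPole_regAt_lift (-A)

lemma evalM_neg (hG : ¬ HasPole G s) : evalM (-G) s = -evalM G s := by
  obtain ⟨A, rfl⟩ := exists_regAt_lift hG
  rw [← map_neg, evalM_regAt_lift, evalM_regAt_lift, map_neg]

lemma Proper.neg (hG : Proper G) : Proper (-G) := by
  obtain ⟨A, rfl⟩ := exists_properFunctions_lift hG
  simpa only [map_neg] using proper_properFunctions_lift (-A)

lemma evalTop_neg (hG : Proper G) : evalTop (-G) = -evalTop G := by
  obtain ⟨A, rfl⟩ := exists_properFunctions_lift hG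
  rw [← map_neg, evalTop_properFunctions_lift, evalTop_properFunctions_lift, map_neg]

lemma evalM_mul_eq_one (hG : ¬ HasPole G s) (hH : ¬ HasPole H s) (h : G * H = 1) :
    evalM G s * evalM H s = 1 := by
  obtain ⟨A, rfl⟩ := exists_regAt_lift hG
  obtain ⟨B, rfl⟩ := exists_regAt_lift hH
  have hAB : A * B = 1 :=
    mapMatrix_injective (φ := algebraMap (regAt s) (RatFunc ℝ)) Subtype.val_injective
      (by rw [map_mul, h, map_one])
  rw [evalM_regAt_lift, evalM_regAt_lift, ← map_mul, hAB, map_one]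

lemma evalTop_mul_eq_one (hG : Proper G) (hH : Proper H) (h : G * H = 1) :
    evalTop G * evalTop H = 1 := by
  obtain ⟨A, rfl⟩ := exists_properFunctions_lift hG
  obtain ⟨B, rfl⟩ := exists_properFunctions_lift hH
  have hAB : A * B = 1 :=
    mapMatrix_injective (φ := algebraMap properFunctions (RatFunc ℝ)) Subtype.val_injective
      (by rw [map_mul, h, map_one])
  rw [evalTop_properFunctions_lift, evalTop_properFunctions_lift, ← map_mul, hAB, map_one]

lemma isUnit_of_isUnit_evalM (hG : ¬ HasPole G s) (h : IsUnit (evalM G s)) : IsUnit G := by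
  obtain ⟨A, rfl⟩ := exists_regAt_lift hG
  exact (isUnit_of_isUnit_mapMatrix (evalHom s) (A := A) h).map _

lemma not_hasPole_inv (hG : ¬ HasPole G s) (h : IsUnit (evalM G s)) : ¬ HasPole G⁻¹ s := by
  obtain ⟨A, rfl⟩ := exists_regAt_lift hG
  have hA := isUnit_of_isUnit_mapMatrix (evalHom s) (A := A) h
  rw [← mapMatrix_nonsing_inv _ hA]
  exact not_hasPole_regAt_lift _

lemma Proper.inv (hG : Proper G) (h : IsUnit (evalTop G)) : Proper G⁻¹ := by
  obtain ⟨A, rfl⟩ := exists_properFunctions_lift hG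
  have hA := isUnit_of_isUnit_mapMatrix evalInfHom (A := A) h
  rw [← mapMatrix_nonsing_inv _ hA]
  exact proper_properFunctions_lift _

lemma hasPole_conj : HasPole G ((starRingEnd ℂ) s) ↔ HasPole G s := by
  simp only [HasPole, isPoleAt_conj]

lemma evalM_conj (G : Matrix (Fin n) (Fin n) (RatFunc ℝ)) (s : ℂ) :
    evalM G ((starRingEnd ℂ) s) = (evalM G s).map (starRingEnd ℂ) := by
  ext i j; exact evalC_conj _ _

lemma evalR_map_ofReal (G : Matrix (Fin n) (Fin n) (RatFunc ℝ)) (x : ℝ) :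
    (evalR G x).map Complex.ofReal = evalM G x := by
  ext i j
  simpa [evalR, evalM, RatFunc.eval] using (evalC_ofReal (G i j) x).symm

lemma finite_setOf_hasPole (G : Matrix (Fin n) (Fin n) (RatFunc ℝ)) :
    {s : ℂ | HasPole G s}.Finite := by
  simp only [HasPole, Set.ofPred_exists]
  exact Set.finite_iUnion fun i => Set.finite_iUnion fun j => finite_setOf_isPoleAt _

lemma eventually_not_hasPole (G : Matrix (Fin n) (Fin n) (RatFunc ℝ)) (a : ℂ) :
    ∀ᶠ s in 𝓝[≠] a, ¬ HasPole G s :=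
  nhdsNE_le_cofinite a (finite_setOf_hasPole G).compl_mem_cofinite

lemma differentiableAt_evalM (h : ¬ HasPole G s) : DifferentiableAt ℂ (evalM G) s := by
  refine differentiableAt_pi.2 fun i => differentiableAt_pi.2 fun j => ?_
  exact differentiableAt_evalC fun hp => h ⟨i, j, hp⟩

lemma continuousAt_evalM (h : ¬ HasPole G s) : ContinuousAt (evalM G) s :=
  (differentiableAt_evalM h).continuousAt

lemma tendsto_evalM_cobounded (h : Proper G) :
    Tendsto (evalM G) (Bornology.cobounded ℂ) (𝓝 (evalTop G)) :=
  tendsto_pi_nhds.2 fun i => tendsto_pi_nhds.2 fun j => tendsto_evalC_cobounded (h i j)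

end TransferMatrix

/-! ### Holomorphic functions on the right half-plane -/

section RightHalfPlane

variable {f k φ : ℂ → ℂ} {Z : Finset ℂ} {a s : ℂ}

/-- The product `∏ (s - a) / (s - a + 1)` over `a ∈ Z`. For `Z` on the imaginary axis it is bounded
by one on the closed right half-plane and vanishes exactly on `Z` there, so multiplying by it
restores continuity of a bounded function at the points of `Z`. -/
def dampingFactor (Z : Finset ℂ) (s : ℂ) : ℂ := ∏ a ∈ Z, (s - a) / (s - a + 1)

lemma sub_add_one_ne_zero (ha : a.re = 0) (hs : 0 ≤ s.re) : s - a + 1 ≠ 0 := by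
  intro h
  have hre := congrArg Complex.re h
  simp only [Complex.add_re, Complex.sub_re, ha, Complex.one_re, Complex.zero_re] at hre
  linarith

lemma norm_dampingFactor_le_one (hZ : ∀ a ∈ Z, a.re = 0) (hs : 0 ≤ s.re) :
    ‖dampingFactor Z s‖ ≤ 1 := by
  rw [dampingFactor, norm_prod]
  refine Finset.prod_le_one (fun _ _ => norm_nonneg _) fun a ha => ?_
  rw [norm_div, div_le_one (norm_pos_iff.2 (sub_add_one_ne_zero (hZ a ha) hs)),
    ← sq_le_sq₀ (norm_nonneg _) (norm_nonneg _), Complex.sq_norm, Complex.sq_norm,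
    Complex.normSq_apply, Complex.normSq_apply]
  simp only [Complex.add_re, Complex.sub_re, Complex.add_im, Complex.sub_im, hZ a ha,
    Complex.one_re, Complex.one_im]
  nlinarith

lemma differentiableAt_dampingFactor (hZ : ∀ a ∈ Z, a.re = 0) (hs : 0 ≤ s.re) :
    DifferentiableAt ℂ (dampingFactor Z) s :=
  DifferentiableAt.fun_finsetProd (f := fun a s => (s - a) / (s - a + 1)) fun a ha =>
    DifferentiableAt.div (by fun_prop) (by fun_prop) (sub_add_one_ne_zero (hZ a ha) hs)

lemma dampingFactor_eq_zero (ha : a ∈ Z) : dampingFactor Z a = 0 :=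
  Finset.prod_eq_zero ha (by simp)

lemma notMem_of_re_pos (hZ : ∀ a ∈ Z, a.re = 0) (hs : 0 < s.re) : s ∉ Z :=
  fun h => hs.ne' (hZ s h)

lemma dampingFactor_ne_zero (hZ : ∀ a ∈ Z, a.re = 0) (hs : 0 < s.re) :
    dampingFactor Z s ≠ 0 :=
  Finset.prod_ne_zero_iff.2 fun a ha => div_ne_zero
    (sub_ne_zero.2 fun h => notMem_of_re_pos hZ hs (h ▸ ha))
    (sub_add_one_ne_zero (hZ a ha) hs.le)

lemma diffContOnCl_mul_dampingFactor {M : ℝ} (hZ : ∀ a ∈ Z, a.re = 0)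
    (hd : ∀ s : ℂ, 0 < s.re → DifferentiableAt ℂ f s)
    (hc : ∀ s : ℂ, s.re = 0 → s ∉ Z → ContinuousAt f s)
    (hM : ∀ s : ℂ, 0 ≤ s.re → s ∉ Z → ‖f s‖ ≤ M) :
    DiffContOnCl ℂ (fun s => f s * dampingFactor Z s) {s | 0 < s.re} := by
  refine ⟨fun s hs => ((hd s hs).mul
    (differentiableAt_dampingFactor hZ (le_of_lt hs))).differentiableWithinAt, ?_⟩
  rw [Complex.closure_setOfPred_lt_re]
  intro s (hs : 0 ≤ s.re)
  have hq := (differentiableAt_dampingFactor hZ hs).continuousAt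
  by_cases hsZ : s ∈ Z
  · have hbound : Tendsto (fun w => M * ‖dampingFactor Z w‖) (𝓝[{w | 0 ≤ w.re}] s) (𝓝 0) := by
      simpa only [dampingFactor_eq_zero hsZ, norm_zero, mul_zero] using
        (hq.norm.tendsto.const_mul M).mono_left nhdsWithin_le_nhds
    rw [ContinuousWithinAt, dampingFactor_eq_zero hsZ, mul_zero]
    refine squeeze_zero_norm' ?_ hbound
    filter_upwards [self_mem_nhdsWithin] with w hw
    rw [norm_mul]
    by_cases hwZ : w ∈ Z
    · simp [dampingFactor_eq_zero hwZ]
    · exact mul_le_mul_of_nonneg_right (hM w hw hwZ) (norm_nonneg _)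
  · have hf : ContinuousAt f s := hs.eq_or_lt.elim (fun h => hc s h.symm hsZ)
      fun h => (hd s h).continuousAt
    exact (hf.mul hq).continuousWithinAt

lemma norm_mul_dampingFactor_le_one {M : ℝ} (hZ : ∀ a ∈ Z, a.re = 0)
    (hd : ∀ s : ℂ, 0 < s.re → DifferentiableAt ℂ f s)
    (hc : ∀ s : ℂ, s.re = 0 → s ∉ Z → ContinuousAt f s)
    (hf : ∀ s : ℂ, s.re = 0 → s ∉ Z → ‖f s‖ ≤ 1)
    (hM : ∀ s : ℂ, 0 < s.re → ‖f s‖ ≤ M) (hs : 0 < s.re) :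
    ‖f s * dampingFactor Z s‖ ≤ 1 := by
  have hM' : ∀ s : ℂ, 0 ≤ s.re → s ∉ Z → ‖f s‖ ≤ max M 1 := fun s hs hsZ =>
    hs.eq_or_lt.elim (fun h => (hf s h.symm hsZ).trans (le_max_right _ _))
      fun h => (hM s h).trans (le_max_left _ _)
  have hbound : ∀ s : ℂ, 0 < s.re → ‖f s * dampingFactor Z s‖ ≤ max M 1 := fun s hs => by
    rw [norm_mul, ← mul_one (max M 1)]
    exact mul_le_mul (hM' s hs.le (notMem_of_re_pos hZ hs)) (norm_dampingFactor_le_one hZ hs.le)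
      (norm_nonneg _) (zero_le_one.trans (le_max_right _ _))
  refine PhragmenLindelof.right_half_plane_of_bounded_on_real (C := 1)
    (f := fun s => f s * dampingFactor Z s) (diffContOnCl_mul_dampingFactor hZ hd hc hM')
    ⟨0, by norm_num, 0, ?_⟩ ⟨max M 1, ?_⟩ (fun x => ?_) hs.le
  · refine Asymptotics.IsBigO.of_bound (max M 1) (eventually_inf_principal.2 ?_)
    exact .of_forall fun s hs => by simpa using hbound s hs
  · rw [eventually_map]
    filter_upwards [eventually_gt_atTop 0] with x hx
    exact hbound x (by simpa using hx)
  · have hx : (x * Complex.I : ℂ).re = 0 := by simp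
    by_cases hxZ : (x * Complex.I : ℂ) ∈ Z
    · simp [dampingFactor_eq_zero hxZ]
    · rw [norm_mul]
      exact mul_le_one₀ (hf _ hx hxZ) (norm_nonneg _) (norm_dampingFactor_le_one hZ hx.ge)

/-- Phragmén–Lindelöf with finitely many exceptional boundary points: the damping factor costs
a fixed factor, which taking powers of `f` removes. -/
lemma norm_le_one_of_norm_le_one_on_axis {M : ℝ} (hZ : ∀ a ∈ Z, a.re = 0)
    (hd : ∀ s : ℂ, 0 < s.re → DifferentiableAt ℂ f s)
    (hc : ∀ s : ℂ, s.re = 0 → s ∉ Z → ContinuousAt f s)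
    (hf : ∀ s : ℂ, s.re = 0 → s ∉ Z → ‖f s‖ ≤ 1)
    (hM : ∀ s : ℂ, 0 < s.re → ‖f s‖ ≤ M) (hs : 0 < s.re) : ‖f s‖ ≤ 1 := by
  by_contra! hlt
  have hq : 0 < ‖dampingFactor Z s‖ := norm_pos_iff.2 (dampingFactor_ne_zero hZ hs)
  obtain ⟨N, hN⟩ := pow_unbounded_of_one_lt ‖dampingFactor Z s‖⁻¹ hlt
  have hpow := norm_mul_dampingFactor_le_one (f := fun s => f s ^ N) (M := M ^ N) hZ
    (fun s hs => (hd s hs).pow N) (fun s hs hsZ => (hc s hs hsZ).pow N)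
    (fun s hs hsZ => by simpa using pow_le_one₀ (norm_nonneg _) (hf s hs hsZ))
    (fun s hs => by simpa using pow_le_pow_left₀ (norm_nonneg _) (hM s hs) N) hs
  rw [norm_mul, norm_pow, ← le_div_iff₀ hq, one_div] at hpow
  exact hpow.not_gt hN

lemma re_nonneg_of_re_nonneg_on_axis {c : ℝ} (hZ : ∀ a ∈ Z, a.re = 0)
    (hd : ∀ s : ℂ, 0 < s.re → DifferentiableAt ℂ k s)
    (hc : ∀ s : ℂ, s.re = 0 → s ∉ Z → ContinuousAt k s)
    (hk : ∀ s : ℂ, s.re = 0 → s ∉ Z → 0 ≤ (k s).re)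
    (hbdd : ∀ s : ℂ, 0 < s.re → c ≤ (k s).re) (hs : 0 < s.re) : 0 ≤ (k s).re := by
  have hexp : ‖Complex.exp (-k s)‖ ≤ 1 :=
    norm_le_one_of_norm_le_one_on_axis (f := fun s => Complex.exp (-k s)) (M := Real.exp (-c)) hZ
      (fun s hs => (hd s hs).neg.cexp) (fun s hs hsZ => (hc s hs hsZ).neg.cexp)
      (fun s hs hsZ => by simpa [Complex.norm_exp] using hk s hs hsZ)
      (fun s hs => by simpa [Complex.norm_exp] using hbdd s hs) hs
  simpa [Complex.norm_exp] using hexp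

lemma bddBelow_image_of_isBoundedUnder {X : Type*} [PseudoMetricSpace X] [ProperSpace X]
    {S : Set X} {u : X → ℝ} (hloc : ∀ a ∈ closure S, (𝓝[S] a).IsBoundedUnder (· ≥ ·) u)
    (hinf : (Bornology.cobounded X ⊓ 𝓟 S).IsBoundedUnder (· ≥ ·) u) : BddBelow (u '' S) := by
  obtain ⟨c, hc⟩ := hinf
  rw [eventually_map, eventually_inf_principal] at hc
  set K : Set X := {s | s ∈ S → u s ≥ c}ᶜ
  have hK : IsCompact (closure K) :=
    (Bornology.isCobounded_compl_iff.1 (by rwa [compl_compl])).isCompact_closure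
  have hKS : closure K ⊆ closure S :=
    closure_mono fun s hs => by_contra fun h => hs fun hS => absurd hS h
  have hnear : BddBelow (u '' (closure K ∩ S)) := by
    refine hK.induction_on (p := fun T => BddBelow (u '' (T ∩ S))) (by simp)
      (fun T T' hT hT' => hT'.mono (by gcongr)) (fun T T' hT hT' => ?_) fun a ha => ?_
    · rw [Set.union_inter_distrib_right, Set.image_union]
      exact hT.union hT'
    · obtain ⟨b, hb⟩ := hloc a (hKS ha)
      rw [eventually_map, eventually_nhdsWithin_iff] at hb
      exact ⟨_, mem_nhdsWithin_of_mem_nhds hb, b, by rintro _ ⟨s, ⟨hs, hsS⟩, rfl⟩; exact hs hsS⟩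
  obtain ⟨b, hb⟩ := hnear
  refine ⟨min b c, ?_⟩
  rintro _ ⟨s, hs, rfl⟩
  by_cases hsK : s ∈ K
  · exact (min_le_left _ _).trans (hb ⟨s, ⟨subset_closure hsK, hs⟩, rfl⟩)
  · exact (min_le_right _ _).trans (not_not.1 hsK hs)

lemma isBoundedUnder_ge_re_of_simple_pole (ha : a.re = 0) {r : ℝ} (hr : 0 ≤ r)
    (hd : ∀ᶠ s in 𝓝[≠] a, DifferentiableAt ℂ k s)
    (hres : Tendsto (fun s => (s - a) * k s) (𝓝[≠] a) (𝓝 (r : ℂ))) :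
    (𝓝[{s | 0 < s.re}] a).IsBoundedUnder (· ≥ ·) fun s => (k s).re := by
  classical
  set h : ℂ → ℂ := Function.update (fun s => (s - a) * k s) a r
  have hdiff : DifferentiableAt ℂ h a := by
    refine (Complex.analyticAt_of_differentiable_on_punctured_nhds_of_continuousAt ?_
      (continuousAt_update_same.2 hres)).differentiableAt
    filter_upwards [hd, self_mem_nhdsWithin] with s hs hsa
    have heq : h =ᶠ[𝓝 s] fun s => (s - a) * k s := by
      filter_upwards [isOpen_compl_singleton.mem_nhds hsa] with w hw
      exact Function.update_of_ne hw _ _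
    rw [heq.differentiableAt_iff]
    fun_prop
  obtain ⟨C, hC⟩ := hdiff.isBigO_sub.bound
  refine ⟨-C, ?_⟩
  rw [eventually_map, eventually_nhdsWithin_iff]
  filter_upwards [hC] with s hs (hre : 0 < s.re)
  have hsa : s ≠ a := by rintro rfl; exact hre.ne' ha
  have hsa' : s - a ≠ 0 := sub_ne_zero.2 hsa
  rw [show h s = (s - a) * k s from Function.update_of_ne hsa _ _,
    show h a = r from Function.update_self _ _ _] at hs
  have hbounded : ‖k s - r / (s - a)‖ ≤ C := by
    rw [show k s - r / (s - a) = ((s - a) * k s - r) / (s - a) by field_simp, norm_div,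
      div_le_iff₀ (norm_pos_iff.2 hsa')]
    exact hs
  have hpole : 0 ≤ ((r : ℂ) / (s - a)).re := by
    rw [div_eq_mul_inv, Complex.re_ofReal_mul, Complex.inv_re, Complex.sub_re, ha, sub_zero]
    exact mul_nonneg hr (div_nonneg hre.le (Complex.normSq_nonneg _))
  have hre_le := (abs_le.1 ((Complex.abs_re_le_norm _).trans hbounded)).1
  rw [Complex.sub_re] at hre_le
  change (k s).re ≥ -C
  linarith

lemma isBoundedUnder_ge_re_of_continuousAt (h : ContinuousAt k a) {S : Set ℂ} :
    (𝓝[S] a).IsBoundedUnder (· ≥ ·) fun s => (k s).re :=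
  ((Complex.continuous_re.continuousAt.comp h).tendsto.mono_left
    nhdsWithin_le_nhds).isBoundedUnder_ge

lemma isBoundedUnder_ge_re_slope_of_differentiableAt (ha : 0 ≤ a.re)
    (hd : DifferentiableAt ℂ φ a) :
    (𝓝[{s | 0 < s.re}] a).IsBoundedUnder (· ≥ ·) fun s => ((φ 0 - φ s) / s).re := by
  rcases eq_or_ne a 0 with rfl | ha0
  · have hslope : Tendsto (fun s => (φ 0 - φ s) / s) (𝓝[≠] 0) (𝓝 (-deriv φ 0)) := by
      refine (hasDerivAt_iff_tendsto_slope.1 hd.hasDerivAt).neg.congr fun s => ?_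
      rw [slope_def_field, sub_zero, ← neg_div, neg_sub]
    refine (((Complex.continuous_re.tendsto _).comp hslope).mono_left
      (nhdsWithin_mono _ ?_)).isBoundedUnder_ge
    rintro s (hs : 0 < s.re) rfl
    exact hs.ne' rfl
  · exact isBoundedUnder_ge_re_of_continuousAt
      (ContinuousAt.div (continuousAt_const.sub hd.continuousAt) continuousAt_id ha0)

lemma isBoundedUnder_ge_re_slope_of_residue (ha : a.re = 0) (ha0 : a ≠ 0)
    (hd : ∀ᶠ s in 𝓝[≠] a, DifferentiableAt ℂ φ s) {r : ℝ} (hr : 0 ≤ r)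
    (hres : Tendsto (fun s => (s - a) * φ s) (𝓝[≠] a) (𝓝 (-a * r))) :
    (𝓝[{s | 0 < s.re}] a).IsBoundedUnder (· ≥ ·) fun s => ((φ 0 - φ s) / s).re := by
  refine isBoundedUnder_ge_re_of_simple_pole ha hr ?_ ?_
  · filter_upwards [hd, nhdsWithin_le_nhds (isOpen_ne.mem_nhds ha0)] with s hs hs0
    exact DifferentiableAt.div (by fun_prop) (by fun_prop) hs0
  · have hid : Tendsto (fun s : ℂ => s) (𝓝[≠] a) (𝓝 a) := nhdsWithin_le_nhds
    have hlim := (((hid.sub_const a).mul_const (φ 0)).sub hres).div hid ha0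
    rw [show ((a - a) * φ 0 - -a * r) / a = (r : ℂ) by field_simp; ring] at hlim
    exact hlim.congr fun s => by simp only [Pi.div_apply]; ring

lemma isBoundedUnder_ge_re_slope_cobounded {φtop : ℂ} {S : Set ℂ}
    (htop : Tendsto φ (Bornology.cobounded ℂ) (𝓝 φtop)) :
    (Bornology.cobounded ℂ ⊓ 𝓟 S).IsBoundedUnder (· ≥ ·) fun s => ((φ 0 - φ s) / s).re := by
  have hlim := (htop.const_sub (φ 0)).mul (tendsto_inv₀_cobounded (α := ℂ))
  simp only [← div_eq_mul_inv] at hlim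
  exact (((Complex.continuous_re.tendsto _).comp hlim).mono_left inf_le_left).isBoundedUnder_ge

lemma div_re_nonneg_of_re_eq_zero {w : ℂ} (hs : s.re = 0) (h : 0 ≤ s.im * w.im) :
    0 ≤ (w / s).re := by
  rw [Complex.div_re, hs, mul_zero, zero_div, zero_add, mul_comm]
  exact div_nonneg h (Complex.normSq_nonneg _)

/-- The point is that `(φ 0 - φ s) / s` is positive real. -/
lemma re_le_re_zero_of_im_mul_im_nonpos {φtop : ℂ} (hZ : ∀ a ∈ Z, a.re = 0) (hZ0 : 0 ∉ Z)
    (hd : ∀ s : ℂ, 0 ≤ s.re → s ∉ Z → DifferentiableAt ℂ φ s)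
    (hpunct : ∀ a ∈ Z, ∀ᶠ s in 𝓝[≠] a, DifferentiableAt ℂ φ s)
    (hres : ∀ a ∈ Z, ∃ r : ℝ, 0 ≤ r ∧
      Tendsto (fun s => (s - a) * φ s) (𝓝[≠] a) (𝓝 (-a * r)))
    (him : ∀ s : ℂ, s.re = 0 → s ∉ Z → s.im * (φ s).im ≤ 0) (him0 : (φ 0).im = 0)
    (htop : Tendsto φ (Bornology.cobounded ℂ) (𝓝 φtop)) : φtop.re ≤ (φ 0).re := by
  classical
  have hZ' : ∀ a ∈ insert 0 Z, a.re = 0 := by simpa using hZ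
  obtain ⟨c, hc⟩ : BddBelow ((fun s => ((φ 0 - φ s) / s).re) '' {s : ℂ | 0 < s.re}) := by
    refine bddBelow_image_of_isBoundedUnder (fun a ha => ?_)
      (isBoundedUnder_ge_re_slope_cobounded htop)
    rw [Complex.closure_setOfPred_lt_re] at ha
    by_cases haZ : a ∈ Z
    · obtain ⟨r, hr, hlim⟩ := hres a haZ
      exact isBoundedUnder_ge_re_slope_of_residue (hZ a haZ) (ne_of_mem_of_not_mem haZ hZ0)
        (hpunct a haZ) hr hlim
    · exact isBoundedUnder_ge_re_slope_of_differentiableAt ha (hd a ha haZ)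
  have hpr : ∀ s : ℂ, 0 < s.re → 0 ≤ ((φ 0 - φ s) / s).re := fun s hs => by
    refine re_nonneg_of_re_nonneg_on_axis (k := fun s => (φ 0 - φ s) / s) (c := c) hZ'
      (fun s hs => ?_) (fun s hs hsZ => ?_)
      (fun s hs hsZ => div_re_nonneg_of_re_eq_zero hs ?_) (fun s hs => hc ⟨s, hs, rfl⟩) hs
    · have hs0 : s ≠ 0 := by rintro rfl; exact hs.ne' rfl
      exact ((hd s hs.le (notMem_of_re_pos hZ hs)).const_sub _).div differentiableAt_id hs0
    · rw [Finset.mem_insert, not_or] at hsZ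
      exact ((hd s hs.ge hsZ.2).continuousAt.const_sub _).div continuousAt_id hsZ.1
    · rw [Finset.mem_insert, not_or] at hsZ
      rw [Complex.sub_im, him0, zero_sub, mul_neg]
      exact neg_nonneg.2 (him s hs hsZ.2)
  refine le_of_tendsto ((Complex.continuous_re.tendsto _).comp
    (htop.comp tendsto_ofReal_atTop_cobounded)) ?_
  filter_upwards [eventually_gt_atTop 0] with x hx
  have := hpr x (by simpa using hx)
  rw [Complex.div_ofReal_re, Complex.sub_re, le_div_iff₀ hx, zero_mul] at this
  exact sub_nonneg.1 this

end RightHalfPlane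

/-! ### Negative imaginary matrices -/

section NegativeImaginary

variable {M : Matrix (Fin n) (Fin n) ℂ} {G : Matrix (Fin n) (Fin n) (RatFunc ℝ)} {s a : ℂ}

lemma isHermitian_niKer (M : Matrix (Fin n) (Fin n) ℂ) : (niKer M).IsHermitian := by
  rw [IsHermitian, niKer, conjTranspose_smul, conjTranspose_sub, conjTranspose_conjTranspose,
    Complex.star_def, Complex.conj_I, neg_smul, ← smul_neg, neg_sub]

lemma star_dotProduct_niKer_mulVec (M : Matrix (Fin n) (Fin n) ℂ) (v : Fin n → ℂ) :
    star v ⬝ᵥ (niKer M *ᵥ v) = ((-2 * (star v ⬝ᵥ (M *ᵥ v)).im : ℝ) : ℂ) := by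
  have hconj : star v ⬝ᵥ (Mᴴ *ᵥ v) = (starRingEnd ℂ) (star v ⬝ᵥ (M *ᵥ v)) := by
    rw [star_dotProduct, star_mulVec, conjTranspose_conjTranspose, dotProduct_mulVec]; rfl
  rw [niKer, smul_mulVec, sub_mulVec, dotProduct_smul, dotProduct_sub, hconj, Complex.sub_conj]
  push_cast
  linear_combination (2 * ((star v ⬝ᵥ (M *ᵥ v)).im : ℂ)) * Complex.I_mul_I

lemma posSemidef_niKer_iff : (niKer M).PosSemidef ↔ ∀ v, (star v ⬝ᵥ (M *ᵥ v)).im ≤ 0 := by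
  simp only [posSemidef_iff_dotProduct_mulVec, isHermitian_niKer, true_and,
    star_dotProduct_niKer_mulVec, Complex.zero_le_real]
  exact forall_congr' fun v => by constructor <;> intro h <;> linarith

lemma star_dotProduct_map_conj_mulVec (M : Matrix (Fin n) (Fin n) ℂ) (v : Fin n → ℂ) :
    star v ⬝ᵥ (M.map (starRingEnd ℂ) *ᵥ v) =
      (starRingEnd ℂ) (star (star v) ⬝ᵥ (M *ᵥ star v)) := by
  simp [dotProduct, mulVec, Finset.mul_sum]

lemma posSemidef_map_conj (hM : M.PosSemidef) : (M.map (starRingEnd ℂ)).PosSemidef :=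
  hM.conjTranspose.transpose

lemma jw_im_eq (hs : s.re = 0) : jw s.im = s := by
  apply Complex.ext <;> simp [jw, hs]

lemma im_ne_zero_of_re_eq_zero (hs : s.re = 0) (hs0 : s ≠ 0) : s.im ≠ 0 :=
  fun h => hs0 (Complex.ext hs h)

lemma MemRHinf.not_hasPole (hG : MemRHinf G) (hs : 0 ≤ s.re) : ¬ HasPole G s :=
  fun ⟨i, j, h⟩ => hG.2 s hs i j h

lemma IsSNI.isNI (hG : IsSNI G) : IsNI G :=
  ⟨hG.1.1, fun _ hs => hG.1.not_hasPole hs.le, fun ω hω _ => (hG.2 ω hω).posSemidef,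
    fun ω _ hp => absurd hp (hG.1.not_hasPole (by simp [jw])),
    fun hp => absurd hp (hG.1.not_hasPole le_rfl)⟩

lemma IsNI.im_mul_im_nonpos (hG : IsNI G) (hs : s.re = 0) (hp : ¬ HasPole G s) (v : Fin n → ℂ) :
    s.im * (star v ⬝ᵥ (evalM G s *ᵥ v)).im ≤ 0 := by
  have hpos {s : ℂ} (hs : s.re = 0) (him : 0 < s.im) (hp : ¬ HasPole G s) (v : Fin n → ℂ) :
      (star v ⬝ᵥ (evalM G s *ᵥ v)).im ≤ 0 := by
    rw [← jw_im_eq hs] at hp ⊢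
    exact posSemidef_niKer_iff.1 (hG.2.2.1 _ him hp) v
  rcases lt_trichotomy s.im 0 with him | him | him
  · have hconj := hpos (s := (starRingEnd ℂ) s) (by simpa using hs) (by simpa using him)
      (by rwa [hasPole_conj]) (star v)
    rw [evalM_conj, star_dotProduct_map_conj_mulVec, star_star (star v), star_star,
      Complex.conj_im] at hconj
    exact mul_nonpos_of_nonpos_of_nonneg him.le (by linarith)
  · rw [him, zero_mul]
  · exact mul_nonpos_of_nonneg_of_nonpos him.le (hpos hs him hp v)

lemma tendsto_conj_nhdsNE (a : ℂ) :
    Tendsto (starRingEnd ℂ) (𝓝[≠] a) (𝓝[≠] (starRingEnd ℂ) a) :=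
  tendsto_nhdsWithin_of_tendsto_nhds_of_eventually_within _
    (Complex.continuous_conj.continuousAt.tendsto.mono_left nhdsWithin_le_nhds)
    (eventually_mem_nhdsWithin.mono fun _ hs => (starRingEnd ℂ).injective.ne hs)

lemma IsNI.exists_residue_of_im_pos (hG : IsNI G) (ha : a.re = 0) (him : 0 < a.im) :
    ∃ R : Matrix (Fin n) (Fin n) ℂ, R.PosSemidef ∧
      Tendsto (fun s => (s - a) • evalM G s) (𝓝[≠] a) (𝓝 (-a • R)) := by
  by_cases hp : HasPole G a
  · obtain ⟨R, hR, hlim⟩ := hG.2.2.2.1 a.im him (by rwa [jw_im_eq ha])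
    rw [jw_im_eq ha] at hlim
    have haI : -a = -Complex.I * a.im := by
      apply Complex.ext <;> simp [ha]
    refine ⟨((a.im⁻¹ : ℝ) : ℂ) • R,
      hR.smul (Complex.zero_le_real.2 (inv_nonneg.2 him.le)), ?_⟩
    have hscaled := hlim.const_smul (-Complex.I)
    have him' : (a.im : ℂ) ≠ 0 := by exact_mod_cast him.ne'
    rw [haI, smul_smul, Complex.ofReal_inv, mul_assoc, mul_inv_cancel₀ him', mul_one]
    refine hscaled.congr fun s => ?_
    rw [smul_comm (-Complex.I), smul_smul (-Complex.I), neg_mul, Complex.I_mul_I, neg_neg,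
      one_smul]
  · refine ⟨0, .zero, ?_⟩
    have hid : Tendsto (fun s : ℂ => s - a) (𝓝[≠] a) (𝓝 (a - a)) :=
      (continuous_sub_right a).continuousAt.tendsto.mono_left nhdsWithin_le_nhds
    simpa using hid.smul ((continuousAt_evalM hp).tendsto.mono_left nhdsWithin_le_nhds)

lemma IsNI.exists_residue (hG : IsNI G) (ha : a.re = 0) (ha0 : a ≠ 0) :
    ∃ R : Matrix (Fin n) (Fin n) ℂ, R.PosSemidef ∧
      Tendsto (fun s => (s - a) • evalM G s) (𝓝[≠] a) (𝓝 (-a • R)) := by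
  rcases (im_ne_zero_of_re_eq_zero ha ha0).lt_or_gt with him | him
  · obtain ⟨R, hR, hlim⟩ := hG.exists_residue_of_im_pos (a := (starRingEnd ℂ) a)
      (by simpa using ha) (by simpa using him)
    refine ⟨R.map (starRingEnd ℂ), posSemidef_map_conj hR, ?_⟩
    have hconj := ((continuous_id.matrix_map Complex.continuous_conj).tendsto _).comp
      (hlim.comp (tendsto_conj_nhdsNE a))
    convert hconj using 2
    · ext i j
      simp [evalM_conj]
    · ext i j
      simp
  · exact hG.exists_residue_of_im_pos ha him

lemma isHermitian_of_posSemidef_niKer (h : (niKer M).PosSemidef)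
    (hreal : M.map (starRingEnd ℂ) = M) : M.IsHermitian := by
  have htrace : (niKer M).trace = 0 := by
    have htranspose : Mᴴ = Mᵀ := congrArg transpose hreal
    rw [niKer, htranspose, trace_smul, trace_sub, trace_transpose, sub_self, smul_zero]
  have hzero := h.trace_eq_zero_iff.1 htrace
  rw [niKer, smul_eq_zero_iff_right Complex.I_ne_zero, sub_eq_zero] at hzero
  exact hzero.symm

lemma isClosed_setOf_posSemidef {m : Type*} [Finite m] :
    IsClosed {M : Matrix m m ℂ | M.PosSemidef} := by
  cases nonempty_fintype m
  simp only [posSemidef_iff_dotProduct_mulVec, IsHermitian, Set.ofPred_and, Set.ofPred_forall]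
  refine (isClosed_eq (by fun_prop) continuous_id).inter (isClosed_iInter fun v => ?_)
  exact isClosed_le continuous_const (by fun_prop)

lemma continuous_niKer : Continuous (niKer (n := n)) := by
  unfold niKer; fun_prop

lemma IsNI.isHermitian_of_tendsto {l : Filter ℝ} [l.NeBot] (hG : IsNI G)
    (hl : ∀ᶠ ω in l, 0 < ω ∧ ¬ HasPole G (jw ω))
    (hM : Tendsto (fun ω => evalM G (jw ω)) l (𝓝 M)) (hreal : M.map (starRingEnd ℂ) = M) :
    M.IsHermitian := by
  refine isHermitian_of_posSemidef_niKer (isClosed_setOf_posSemidef.mem_of_tendsto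
    ((continuous_niKer.tendsto M).comp hM) ?_) hreal
  exact hl.mono fun ω hω => hG.2.2.1 ω hω.1 hω.2

lemma continuous_jw : Continuous jw := by
  unfold jw; fun_prop

lemma tendsto_jw_nhdsNE (ω : ℝ) : Tendsto jw (𝓝[≠] ω) (𝓝[≠] jw ω) := by
  refine continuous_jw.continuousWithinAt.tendsto_nhdsWithin fun ω' hω' h => hω' ?_
  simpa [jw] using h

lemma tendsto_jw_atTop_cobounded : Tendsto jw atTop (Bornology.cobounded ℂ) := by
  rw [← tendsto_norm_atTop_iff_cobounded]
  simpa [jw] using tendsto_abs_atTop_atTop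

lemma IsNI.isHermitian_evalM_zero (hG : IsNI G) (h0 : ¬ HasPole G 0) :
    (evalM G 0).IsHermitian := by
  have hjw : Tendsto jw (𝓝[>] 0) (𝓝[≠] 0) := by
    simpa [jw] using (tendsto_jw_nhdsNE 0).mono_left (nhdsGT_le_nhdsNE 0)
  refine hG.isHermitian_of_tendsto (l := 𝓝[>] 0) ?_
    ((continuousAt_evalM h0).tendsto.comp (hjw.mono_right nhdsWithin_le_nhds))
    (by rw [← evalM_conj, map_zero])
  filter_upwards [self_mem_nhdsWithin, hjw.eventually (eventually_not_hasPole G 0)]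
    with ω hω hp using ⟨hω, hp⟩

lemma IsNI.isHermitian_evalTop (hG : IsNI G) : (evalTop G).IsHermitian := by
  refine hG.isHermitian_of_tendsto (l := atTop) ?_
    ((tendsto_evalM_cobounded hG.1).comp tendsto_jw_atTop_cobounded)
    (by ext i j; simp [evalTop])
  filter_upwards [eventually_gt_atTop 0, tendsto_jw_atTop_cobounded.eventually
    (finite_setOf_hasPole G).isBounded] with ω hω hp using ⟨hω, hp⟩

end NegativeImaginary

/-! ### Kernel vectors in the open right half-plane -/

section Kernel

variable {G : Matrix (Fin n) (Fin n) (RatFunc ℝ)} {s₀ s a : ℂ} {u z : Fin n → ℂ}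

/-- The vector function `u - (s₀ / (s - s₀)) z`, which interpolates between `u + z` at `0` and `u`
at `∞`; its pole at `s₀` is harmless to `G(s)` times it when `G(s₀) z = 0`. -/
def interpRight (s₀ : ℂ) (u z : Fin n → ℂ) (s : ℂ) : Fin n → ℂ := u - (s₀ / (s - s₀)) • z

/-- The function holomorphic on the closed right half-plane that agrees with the conjugate of
`interpRight` on the imaginary axis. -/
def interpLeft (s₀ : ℂ) (u z : Fin n → ℂ) (s : ℂ) : Fin n → ℂ :=
  star u + ((starRingEnd ℂ) s₀ / (s + (starRingEnd ℂ) s₀)) • star z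

/-- The holomorphic extension to `s = s₀` of `interpLeft s ⬝ᵥ (G(s) *ᵥ interpRight s)` when
`G(s₀) z = 0`. -/
def interpForm (G : Matrix (Fin n) (Fin n) (RatFunc ℝ)) (s₀ : ℂ) (u z : Fin n → ℂ) (s : ℂ) : ℂ :=
  interpLeft s₀ u z s ⬝ᵥ
    (evalM G s *ᵥ u - s₀ • dslope (fun w => evalM G w *ᵥ z) s₀ s)

lemma star_interpRight (hs : s.re = 0) : star (interpRight s₀ u z s) = interpLeft s₀ u z s := by
  have hconj : (starRingEnd ℂ) s = -s := by apply Complex.ext <;> simp [hs]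
  rw [interpRight, interpLeft, star_sub, star_smul, Complex.star_def, map_div₀, map_sub, hconj,
    ← neg_add', div_neg, neg_smul, sub_neg_eq_add]

lemma interpForm_of_ne (hz : evalM G s₀ *ᵥ z = 0) (hs : s ≠ s₀) :
    interpForm G s₀ u z s = interpLeft s₀ u z s ⬝ᵥ (evalM G s *ᵥ interpRight s₀ u z s) := by
  rw [interpForm, dslope_of_ne _ hs, slope_def_module, hz, sub_zero, smul_smul, interpRight,
    mulVec_sub, mulVec_smul, div_eq_mul_inv]

lemma add_conj_ne_zero (hs₀ : 0 < s₀.re) (hs : 0 ≤ s.re) : s + (starRingEnd ℂ) s₀ ≠ 0 := by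
  intro h
  have hre := congrArg Complex.re h
  rw [Complex.add_re, Complex.conj_re, Complex.zero_re] at hre
  linarith

lemma continuousAt_interpLeft (h : s + (starRingEnd ℂ) s₀ ≠ 0) :
    ContinuousAt (interpLeft s₀ u z) s := by
  unfold interpLeft
  fun_prop (disch := exact h)

lemma continuousAt_interpRight (h : s ≠ s₀) : ContinuousAt (interpRight s₀ u z) s := by
  unfold interpRight
  fun_prop (disch := exact sub_ne_zero.2 h)

lemma differentiableAt_evalM_mulVec (h : ¬ HasPole G s) (v : Fin n → ℂ) :
    DifferentiableAt ℂ (fun s => evalM G s *ᵥ v) s := by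
  have hentry := fun i => differentiableAt_pi.1 (differentiableAt_pi.1 (differentiableAt_evalM h) i)
  refine differentiableAt_pi.2 fun i => ?_
  simp only [mulVec, dotProduct]
  fun_prop

lemma differentiableAt_interpForm (h₀ : ¬ HasPole G s₀) (hs : ¬ HasPole G s)
    (h : s + (starRingEnd ℂ) s₀ ≠ 0) : DifferentiableAt ℂ (interpForm G s₀ u z) s := by
  have hopen : IsOpen {s : ℂ | ¬ HasPole G s} := (finite_setOf_hasPole G).isClosed.isOpen_compl
  have hslope : DifferentiableAt ℂ (dslope (fun w => evalM G w *ᵥ z) s₀) s :=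
    ((Complex.differentiableOn_dslope (hopen.mem_nhds h₀)).2 fun w hw =>
      (differentiableAt_evalM_mulVec hw z).differentiableWithinAt).differentiableAt
        (hopen.mem_nhds hs)
  have hvec : DifferentiableAt ℂ
      (fun s => evalM G s *ᵥ u - s₀ • dslope (fun w => evalM G w *ᵥ z) s₀ s) s :=
    (differentiableAt_evalM_mulVec hs u).sub (hslope.const_smul s₀)
  have hleft : DifferentiableAt ℂ (interpLeft s₀ u z) s := by
    unfold interpLeft
    fun_prop (disch := exact h)
  unfold interpForm
  simp only [dotProduct]
  have := differentiableAt_pi.1 hleft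
  have := differentiableAt_pi.1 hvec
  fun_prop

lemma tendsto_dotProduct_mulVec {X : Type*} {l : Filter X} {w v : X → Fin n → ℂ}
    {A : X → Matrix (Fin n) (Fin n) ℂ} {w₀ v₀ : Fin n → ℂ} {A₀ : Matrix (Fin n) (Fin n) ℂ}
    (hw : Tendsto w l (𝓝 w₀)) (hA : Tendsto A l (𝓝 A₀)) (hv : Tendsto v l (𝓝 v₀)) :
    Tendsto (fun x => w x ⬝ᵥ (A x *ᵥ v x)) l (𝓝 (w₀ ⬝ᵥ (A₀ *ᵥ v₀))) := by
  have hcont : Continuous fun p : (Fin n → ℂ) × Matrix (Fin n) (Fin n) ℂ × (Fin n → ℂ) =>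
      p.1 ⬝ᵥ (p.2.1 *ᵥ p.2.2) := by fun_prop
  have htriple : Tendsto (fun x => (w x, A x, v x)) l (𝓝 (w₀, A₀, v₀)) :=
    hw.prodMk_nhds (hA.prodMk_nhds hv)
  exact (hcont.tendsto _).comp htriple

lemma tendsto_interpForm_cobounded (hG : Proper G) (hz : evalM G s₀ *ᵥ z = 0) :
    Tendsto (interpForm G s₀ u z) (Bornology.cobounded ℂ) (𝓝 (star u ⬝ᵥ (evalTop G *ᵥ u))) := by
  have hdiv (c b : ℂ) : Tendsto (fun s => c / (s + b)) (Bornology.cobounded ℂ) (𝓝 0) := by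
    have hshift : Tendsto (fun s => s + b) (Bornology.cobounded ℂ) (Bornology.cobounded ℂ) :=
      tendsto_add_const_cobounded b
    simpa [div_eq_mul_inv] using (tendsto_inv₀_cobounded.comp hshift).const_mul c
  have hleft : Tendsto (interpLeft s₀ u z) (Bornology.cobounded ℂ) (𝓝 (star u)) := by
    unfold interpLeft
    simpa using ((hdiv _ _).smul_const (star z)).const_add (star u)
  have hright : Tendsto (interpRight s₀ u z) (Bornology.cobounded ℂ) (𝓝 u) := by
    unfold interpRight
    simpa [sub_eq_add_neg] using ((hdiv s₀ (-s₀)).smul_const z).const_sub u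
  refine (tendsto_dotProduct_mulVec hleft (tendsto_evalM_cobounded hG) hright).congr' ?_
  filter_upwards [Bornology.isBounded_singleton (x := s₀)] with s hs
  exact (interpForm_of_ne hz hs).symm

lemma IsNI.exists_residue_interpForm (hG : IsNI G) (hs₀ : 0 < s₀.re) (hz : evalM G s₀ *ᵥ z = 0)
    (ha : a.re = 0) (ha0 : a ≠ 0) : ∃ r : ℝ, 0 ≤ r ∧
      Tendsto (fun s => (s - a) * interpForm G s₀ u z s) (𝓝[≠] a) (𝓝 (-a * r)) := by
  obtain ⟨R, hR, hlim⟩ := hG.exists_residue ha ha0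
  have has₀ : a ≠ s₀ := by rintro rfl; exact hs₀.ne' ha
  have hnonneg := hR.dotProduct_mulVec_nonneg (interpRight s₀ u z a)
  refine ⟨_, norm_nonneg (star (interpRight s₀ u z a) ⬝ᵥ (R *ᵥ interpRight s₀ u z a)), ?_⟩
  rw [← Complex.eq_coe_norm_of_nonneg hnonneg]
  have hform := tendsto_dotProduct_mulVec
    ((continuousAt_interpLeft (u := u) (z := z)
      (add_conj_ne_zero hs₀ ha.ge)).tendsto.mono_left nhdsWithin_le_nhds)
    hlim ((continuousAt_interpRight (u := u) (z := z) has₀).tendsto.mono_left nhdsWithin_le_nhds)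
  rw [smul_mulVec, dotProduct_smul, ← star_interpRight ha, smul_eq_mul] at hform
  refine hform.congr' ?_
  filter_upwards [nhdsWithin_le_nhds (isOpen_ne.mem_nhds has₀)] with s hs
  rw [interpForm_of_ne hz hs, smul_mulVec, dotProduct_smul, smul_eq_mul]

/-- The scalar lemma applied to `interpForm`: on the imaginary axis it is the quadratic form of
`G` at `interpRight`. -/
lemma IsNI.re_evalTop_le_of_evalM_mulVec_eq_zero (hG : IsNI G) (h0 : ¬ HasPole G 0)
    (hs₀ : 0 < s₀.re) (hz : evalM G s₀ *ᵥ z = 0) (u : Fin n → ℂ) :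
    (star u ⬝ᵥ (evalTop G *ᵥ u)).re ≤ (star (u + z) ⬝ᵥ (evalM G 0 *ᵥ (u + z))).re := by
  have hs₀0 : s₀ ≠ 0 := by rintro rfl; exact hs₀.ne' rfl
  have haxis {s : ℂ} (hs : s.re = 0) : interpForm G s₀ u z s =
      star (interpRight s₀ u z s) ⬝ᵥ (evalM G s *ᵥ interpRight s₀ u z s) := by
    rw [interpForm_of_ne hz (by rintro rfl; exact hs₀.ne' hs), star_interpRight hs]
  have hzero : interpRight s₀ u z 0 = u + z := by
    rw [interpRight, zero_sub, div_neg, div_self hs₀0, neg_smul, one_smul, sub_neg_eq_add]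
  rw [← hzero, ← haxis Complex.zero_re]
  set Z := ((finite_setOf_hasPole G).inter_of_left {s : ℂ | s.re = 0}).toFinset
  have hmem {s : ℂ} : s ∈ Z ↔ HasPole G s ∧ s.re = 0 := by simp [Z]
  have hreg {s : ℂ} (hs : 0 ≤ s.re) (hsZ : s ∉ Z) : ¬ HasPole G s := fun hp =>
    hs.eq_or_lt.elim (fun h => hsZ (hmem.2 ⟨hp, h.symm⟩)) fun h => hG.2.1 s h hp
  refine re_le_re_zero_of_im_mul_im_nonpos (Z := Z) (fun a ha => (hmem.1 ha).2)
    (fun h => h0 (hmem.1 h).1) (fun s hs hsZ => differentiableAt_interpForm (hG.2.1 s₀ hs₀)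
      (hreg hs hsZ) (add_conj_ne_zero hs₀ hs)) (fun a ha => ?_) (fun a ha => ?_)
    (fun s hs hsZ => ?_) ?_ (tendsto_interpForm_cobounded hG.1 hz)
  · have hne : ∀ᶠ s in 𝓝[≠] a, s + (starRingEnd ℂ) s₀ ≠ 0 :=
      nhdsWithin_le_nhds ((continuous_add_const _).continuousAt.eventually_ne
        (add_conj_ne_zero hs₀ (hmem.1 ha).2.ge))
    filter_upwards [eventually_not_hasPole G a, hne] with s hs hs'
    exact differentiableAt_interpForm (hG.2.1 s₀ hs₀) hs hs'
  · exact hG.exists_residue_interpForm hs₀ hz (hmem.1 ha).2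
      (by rintro rfl; exact h0 (hmem.1 ha).1)
  · rw [haxis hs]
    exact hG.im_mul_im_nonpos hs (hreg hs.ge hsZ) _
  · rw [haxis Complex.zero_re]
    exact (hG.isHermitian_evalM_zero h0).im_star_dotProduct_mulVec_self _

lemma IsNI.posSemidef_evalM_zero_sub_evalTop (hG : IsNI G) (h0 : ¬ HasPole G 0) :
    (evalM G 0 - evalTop G).PosSemidef := by
  have hH := (hG.isHermitian_evalM_zero h0).sub hG.isHermitian_evalTop
  refine .of_dotProduct_mulVec_nonneg hH fun u => Complex.nonneg_iff.2 ⟨?_, ?_⟩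
  · have hle := hG.re_evalTop_le_of_evalM_mulVec_eq_zero h0 (s₀ := 1) (by simp)
      (mulVec_zero _) u
    rw [add_zero] at hle
    rwa [sub_mulVec, dotProduct_sub, Complex.sub_re, sub_nonneg]
  · exact (hH.im_star_dotProduct_mulVec_self u).symm

end Kernel

/-! ### Loewner order and inverses -/

section InverseLoewner

variable {ι 𝕜 : Type*} [Fintype ι] [RCLike 𝕜]

lemma exists_mulVec_eq_of_forall_ker {H : Matrix ι ι 𝕜} (hH : H.IsHermitian) {b : ι → 𝕜}
    (hb : ∀ k, H *ᵥ k = 0 → star k ⬝ᵥ b = 0) : ∃ u, H *ᵥ u = b := by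
  classical
  have hsymm := isSymmetric_toEuclideanLin_iff.2 hH
  have hmem : WithLp.toLp 2 b ∈ LinearMap.range (toEuclideanLin H) := by
    rw [← Submodule.orthogonal_orthogonal (LinearMap.range _), hsymm.orthogonal_range,
      Submodule.mem_orthogonal]
    intro k hk
    rw [EuclideanSpace.inner_eq_star_dotProduct, dotProduct_comm]
    exact hb _ (congrArg WithLp.ofLp hk)
  obtain ⟨u, hu⟩ := hmem
  exact ⟨u.ofLp, congrArg WithLp.ofLp hu⟩

lemma eq_zero_of_forall_le_re_mul {w : 𝕜} {c : ℝ} (h : ∀ t : 𝕜, c ≤ RCLike.re (t * w)) :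
    w = 0 := by
  by_contra hw
  have hpos : 0 < ‖w‖ ^ 2 := by positivity
  have hval := h (((c - 1) / ‖w‖ ^ 2 : ℝ) * (starRingEnd 𝕜) w)
  rw [mul_assoc, RCLike.conj_mul, ← RCLike.ofReal_pow, ← RCLike.ofReal_mul, RCLike.ofReal_re,
    div_mul_cancel₀ _ hpos.ne'] at hval
  linarith

lemma re_star_dotProduct_comm (u v : ι → 𝕜) :
    RCLike.re (star u ⬝ᵥ v) = RCLike.re (star v ⬝ᵥ u) := by
  rw [star_dotProduct, RCLike.star_def, RCLike.conj_re]

lemma re_star_dotProduct_mulVec_add {H : Matrix ι ι 𝕜} (hH : H.IsHermitian) (u v : ι → 𝕜) :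
    RCLike.re (star (u + v) ⬝ᵥ (H *ᵥ (u + v))) = RCLike.re (star u ⬝ᵥ (H *ᵥ u)) +
      2 * RCLike.re (star u ⬝ᵥ (H *ᵥ v)) + RCLike.re (star v ⬝ᵥ (H *ᵥ v)) := by
  have hcross : RCLike.re (star v ⬝ᵥ (H *ᵥ u)) = RCLike.re (star u ⬝ᵥ (H *ᵥ v)) := by
    rw [re_star_dotProduct_comm, star_mulVec, hH.eq, dotProduct_mulVec]
  simp only [star_add, mulVec_add, add_dotProduct, dotProduct_add, map_add, hcross]
  ring

variable {A B : Matrix ι ι 𝕜} {z : ι → 𝕜}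

lemma exists_mulVec_add_eq_mulVec (hA : A.IsHermitian) (hB : B.IsHermitian)
    (hz : ∀ u, RCLike.re (star u ⬝ᵥ (B *ᵥ u)) ≤ RCLike.re (star (u + z) ⬝ᵥ (A *ᵥ (u + z)))) :
    ∃ u, A *ᵥ (u + z) = B *ᵥ u := by
  obtain ⟨u, hu⟩ := exists_mulVec_eq_of_forall_ker (hA.sub hB) (b := -(A *ᵥ z)) fun k hk => by
    rw [dotProduct_neg, neg_eq_zero]
    refine eq_zero_of_forall_le_re_mul (c := -RCLike.re (star z ⬝ᵥ (A *ᵥ z)) / 2) fun t => ?_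
    have hAB : B *ᵥ k = A *ᵥ k := (sub_eq_zero.1 (sub_mulVec A B k ▸ hk)).symm
    have hle := hz (star t • k)
    rw [re_star_dotProduct_mulVec_add hA, mulVec_smul, mulVec_smul, hAB, star_smul, star_star,
      smul_dotProduct t, smul_dotProduct t, smul_eq_mul, smul_eq_mul] at hle
    linarith
  refine ⟨u, ?_⟩
  rw [sub_mulVec, sub_eq_iff_eq_add] at hu
  rw [mulVec_add, hu]
  abel

variable [DecidableEq ι]

/-- Minimising `(u + z)ᴴ A (u + z) - uᴴ B u` over `u` gives `A (u + z) = B u =: y`, with minimal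
value `zᴴ y ≥ 0`; but `yᴴ (B⁻¹ - A⁻¹) y = -yᴴ z` is nonnegative as well. -/
lemma eq_zero_of_posSemidef_inv_sub_inv (hA : A.IsHermitian) (hB : B.IsHermitian)
    (hAu : IsUnit A) (hBu : IsUnit B) (hinv : (B⁻¹ - A⁻¹).PosSemidef)
    (hz : ∀ u, RCLike.re (star u ⬝ᵥ (B *ᵥ u)) ≤ RCLike.re (star (u + z) ⬝ᵥ (A *ᵥ (u + z)))) :
    z = 0 := by
  obtain ⟨u, hu⟩ := exists_mulVec_add_eq_mulVec hA hB hz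
  set y := B *ᵥ u with hy
  have hAy : A⁻¹ *ᵥ y = u + z := by
    rw [← hu, mulVec_mulVec, nonsing_inv_mul _ ((isUnit_iff_isUnit_det _).1 hAu), one_mulVec]
  have hBy : B⁻¹ *ᵥ y = u := by
    rw [mulVec_mulVec, nonsing_inv_mul _ ((isUnit_iff_isUnit_det _).1 hBu), one_mulVec]
  have hdiff : (B⁻¹ - A⁻¹) *ᵥ y = -z := by rw [sub_mulVec, hAy, hBy]; abel
  have hzy : 0 ≤ RCLike.re (star z ⬝ᵥ y) := by
    have hle := hz u
    rw [hu, ← hy, star_add, add_dotProduct, map_add] at hle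
    linarith
  have hnonneg := RCLike.nonneg_iff.1 (hinv.dotProduct_mulVec_nonneg y)
  have hform : star y ⬝ᵥ ((B⁻¹ - A⁻¹) *ᵥ y) = 0 := by
    refine RCLike.ext ((le_antisymm ?_ hnonneg.1).trans (map_zero _).symm)
      (hnonneg.2.trans (map_zero _).symm)
    rw [hdiff, dotProduct_neg, map_neg, re_star_dotProduct_comm]
    linarith
  simpa [hdiff] using (hinv.dotProduct_mulVec_zero_iff y).1 hform

lemma isUnit_of_posSemidef_sub_of_posSemidef_inv_sub_inv {M : Matrix ι ι 𝕜} (hA : A.IsHermitian)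
    (hB : B.IsHermitian) (hAu : IsUnit A) (hBu : IsUnit B) (hinv : (B⁻¹ - A⁻¹).PosSemidef)
    (hBM : (M - B).PosSemidef) (hMA : (A - M).PosSemidef) : IsUnit M := by
  refine mulVec_injective_iff_isUnit.1 ((injective_iff_map_eq_zero M.mulVecLin).2 fun z hz => ?_)
  have hM : M.IsHermitian := sub_add_cancel M B ▸ hBM.isHermitian.add hB
  have hle {X Y : Matrix ι ι 𝕜} (h : (Y - X).PosSemidef) (v : ι → 𝕜) :
      RCLike.re (star v ⬝ᵥ (X *ᵥ v)) ≤ RCLike.re (star v ⬝ᵥ (Y *ᵥ v)) := by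
    have := (RCLike.nonneg_iff.1 (h.dotProduct_mulVec_nonneg v)).1
    rwa [sub_mulVec, dotProduct_sub, map_sub, sub_nonneg] at this
  refine eq_zero_of_posSemidef_inv_sub_inv hA hB hAu hBu hinv fun u => ?_
  calc RCLike.re (star u ⬝ᵥ (B *ᵥ u)) ≤ RCLike.re (star u ⬝ᵥ (M *ᵥ u)) := hle hBM u
    _ = RCLike.re (star (u + z) ⬝ᵥ (M *ᵥ (u + z))) := by
      have hMz : M *ᵥ z = 0 := hz
      rw [re_star_dotProduct_mulVec_add hM, hMz]
      simp
    _ ≤ RCLike.re (star (u + z) ⬝ᵥ (A *ᵥ (u + z))) := hle hMA (u + z)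

end InverseLoewner

section Spectrum

lemma forall_isUnit_one_sub_smul_iff {K R : Type*} [Field K] [LinearOrder K]
    [IsStrictOrderedRing K] [Ring R] [Algebra K R] {a : R} :
    (∀ t ∈ Set.Icc (0 : K) 1, IsUnit (1 - t • a)) ↔ ∀ r ∈ spectrum K a, r < 1 := by
  have hscale {t : K} (ht : 0 < t) : IsUnit (1 - t • a) ↔ t⁻¹ ∉ spectrum K a := by
    rw [spectrum.notMem_iff]
    have heq : 1 - t • a = Units.mk0 t ht.ne' • (algebraMap K R t⁻¹ - a) := by
      rw [Units.smul_mk0, smul_sub, Algebra.algebraMap_eq_smul_one, smul_smul,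
        mul_inv_cancel₀ ht.ne', one_smul]
    rw [heq, isUnit_smul_iff]
  refine ⟨fun h r hr => lt_of_not_ge fun hr1 => ?_, fun h t ht => ?_⟩
  · have hr0 : 0 < r := one_pos.trans_le hr1
    have hunit := h r⁻¹ ⟨(inv_pos.2 hr0).le, inv_le_one_of_one_le₀ hr1⟩
    rw [hscale (inv_pos.2 hr0), inv_inv] at hunit
    exact hunit hr
  · rcases ht.1.eq_or_lt with rfl | ht0
    · simp
    · exact (hscale ht0).2 fun hmem => (h _ hmem).not_ge (one_le_inv₀ ht0 |>.2 ht.2)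

lemma forall_spectrum_mul_comm_lt_one {K R : Type*} [Field K] [LinearOrder K]
    [IsStrictOrderedRing K] [Ring R] [Algebra K R] {a b : R}
    (h : ∀ r ∈ spectrum K (a * b), r < 1) : ∀ r ∈ spectrum K (b * a), r < 1 := by
  intro r hr
  rcases eq_or_ne r 0 with rfl | hr0
  · exact one_pos
  · exact h r ((spectrum.nonzero_mul_comm b a).subset ⟨hr, hr0⟩).1

variable {ι : Type*} [Fintype ι]

open scoped MatrixOrder Matrix.Norms.L2Operator in
lemma exists_eq_conjTranspose_mul_self {D : Matrix ι ι ℂ} (hD : D.PosSemidef) :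
    ∃ R : Matrix ι ι ℂ, D = Rᴴ * R := by
  classical exact CStarAlgebra.nonneg_iff_eq_star_mul_self.1 hD.nonneg

variable [DecidableEq ι]

open scoped Matrix.Norms.L2Operator in
lemma im_eq_zero_of_mem_spectrum_mul {S D : Matrix ι ι ℂ} (hS : S.IsHermitian)
    (hD : D.PosSemidef) {μ : ℂ} (hμ : μ ∈ spectrum ℂ (S * D)) : μ.im = 0 := by
  obtain ⟨R, rfl⟩ := exists_eq_conjTranspose_mul_self hD
  rcases eq_or_ne μ 0 with rfl | hμ0
  · exact Complex.zero_im
  · rw [← mul_assoc] at hμ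
    have hmem : μ ∈ spectrum ℂ (R * (S * Rᴴ)) :=
      ((spectrum.nonzero_mul_comm (S * Rᴴ) R).subset ⟨hμ, hμ0⟩).1
    have hself : IsSelfAdjoint (R * (S * Rᴴ)) := by
      rw [← mul_assoc]
      exact isHermitian_mul_mul_conjTranspose R hS
    rw [hself.mem_spectrum_eq_re hmem, Complex.ofReal_im]

open scoped Pointwise in
lemma posSemidef_one_sub_of_spectrum_lt_one {H : Matrix ι ι ℂ} (hH : H.IsHermitian)
    (h : ∀ r ∈ spectrum ℝ H, r < 1) : (1 - H).PosSemidef := by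
  have hsub := isHermitian_one.sub hH
  refine hsub.posSemidef_iff_eigenvalues_nonneg.2 fun i => ?_
  have hspec : spectrum ℝ (1 - H) = {1} - spectrum ℝ H := by
    rw [spectrum.singleton_sub_eq, map_one]
  obtain ⟨_, rfl, r, hr, hri⟩ := hspec.subset (hsub.eigenvalues_mem_spectrum_real i)
  exact hri ▸ sub_nonneg.2 (h r hr).le

lemma posSemidef_inv_sub_inv_add {B D : Matrix ι ι ℂ} (hB : B.IsHermitian) (hD : D.PosSemidef)
    (h : ∀ t ∈ Set.Icc (0 : ℝ) 1, IsUnit (B + t • D)) : (B⁻¹ - (B + D)⁻¹).PosSemidef := by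
  have hBu : IsUnit B := by simpa using h 0 (by simp)
  have hBdet := (isUnit_iff_isUnit_det B).1 hBu
  obtain ⟨R, rfl⟩ := exists_eq_conjTranspose_mul_self hD
  have hspec : ∀ r ∈ spectrum ℝ (-(B⁻¹ * Rᴴ) * R), r < 1 :=
    forall_isUnit_one_sub_smul_iff.1 fun t ht => by
      have hfac : 1 - t • (-(B⁻¹ * Rᴴ) * R) = B⁻¹ * (B + t • (Rᴴ * R)) := by
        rw [mul_add, nonsing_inv_mul _ hBdet, neg_mul, smul_neg, sub_neg_eq_add, mul_smul_comm,
          mul_assoc]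
      rw [hfac]
      exact ((isUnit_nonsing_inv_iff).2 hBu).mul (h t ht)
  have hswap := forall_spectrum_mul_comm_lt_one hspec
  have hunit := forall_isUnit_one_sub_smul_iff.2 hswap 1 (by simp)
  have hH : (R * (B⁻¹ * Rᴴ)).IsHermitian := by
    rw [← mul_assoc]
    exact isHermitian_mul_mul_conjTranspose R hB.inv
  have hpsd := posSemidef_one_sub_of_spectrum_lt_one (by rw [mul_neg]; exact hH.neg) hswap
  rw [one_smul, mul_neg, sub_neg_eq_add, ← mul_assoc] at hunit
  rw [mul_neg, sub_neg_eq_add, ← mul_assoc] at hpsd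
  have hwood := add_mul_mul_inv_eq_sub B Rᴴ 1 R hBu isUnit_one (by rwa [inv_one])
  rw [mul_one, inv_one] at hwood
  rw [hwood, sub_sub_cancel]
  have := hpsd.inv.mul_mul_conjTranspose_same (B⁻¹ * Rᴴ)
  rwa [conjTranspose_mul, conjTranspose_conjTranspose, hB.inv.eq, ← mul_assoc] at this

open scoped Pointwise in
lemma eigsRealAndLT_mul_sub_one_iff {S D : Matrix (Fin n) (Fin n) ℂ} (hS : S.IsHermitian)
    (hD : D.PosSemidef) :
    eigsRealAndLT (S * D - 1) 0 ↔ ∀ t ∈ Set.Icc (0 : ℝ) 1, IsUnit (1 - t • (S * D)) := by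
  have hspec : spectrum ℂ (S * D - 1) = spectrum ℂ (S * D) - {1} := by
    rw [spectrum.sub_singleton_eq, map_one]
  rw [forall_isUnit_one_sub_smul_iff, eigsRealAndLT, hspec]
  constructor
  · intro h r hr
    have hr' : (r : ℂ) ∈ spectrum ℂ (S * D) := (spectrum.algebraMap_mem_iff ℂ).2 hr
    simpa using (h _ (Set.sub_mem_sub hr' (Set.mem_singleton 1))).2
  · rintro h _ ⟨μ, hμ, _, rfl, rfl⟩
    have him := im_eq_zero_of_mem_spectrum_mul hS hD hμ
    have hre : μ.re ∈ spectrum ℝ (S * D) := by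
      refine (spectrum.algebraMap_mem_iff ℂ).1 ?_
      convert hμ
      exact Complex.ext rfl him.symm
    simpa [him] using h _ hre

lemma eigsRealAndLT_inv_mul_iff {A B D : Matrix (Fin n) (Fin n) ℂ} (hA : A.IsHermitian)
    (hB : B.IsHermitian) (hBD : (D - B).PosSemidef) (hAB : IsUnit (1 - A * B)) :
    eigsRealAndLT ((1 - A * B)⁻¹ * (A * D - 1)) 0 ↔
      ∀ t ∈ Set.Icc (0 : ℝ) 1, IsUnit (1 - A * (B + t • (D - B))) := by
  have hdet := (isUnit_iff_isUnit_det _).1 hAB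
  have hS : ((1 - A * B)⁻¹ * A).IsHermitian := by
    have hcomm : A * (1 - B * A) = (1 - A * B) * A := by noncomm_ring
    have hdet' : IsUnit (1 - B * A).det := by rwa [det_one_sub_mul_comm]
    rw [IsHermitian, conjTranspose_mul, conjTranspose_nonsing_inv, conjTranspose_sub,
      conjTranspose_mul, conjTranspose_one, hA.eq, hB.eq]
    calc A * (1 - B * A)⁻¹ = (1 - A * B)⁻¹ * ((1 - A * B) * A) * (1 - B * A)⁻¹ := by
          rw [nonsing_inv_mul_cancel_left _ _ hdet]
      _ = (1 - A * B)⁻¹ * A := by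
          rw [← hcomm, ← mul_assoc, mul_nonsing_inv_cancel_right _ _ hdet']
  have hmain : (1 - A * B)⁻¹ * (A * D - 1) = (1 - A * B)⁻¹ * A * (D - B) - 1 := by
    have hsplit : A * D - 1 = A * (D - B) - (1 - A * B) := by noncomm_ring
    rw [hsplit, mul_sub, nonsing_inv_mul _ hdet, mul_assoc]
  rw [hmain, eigsRealAndLT_mul_sub_one_iff hS hBD]
  refine forall₂_congr fun t _ => ?_
  have hfac : 1 - A * (B + t • (D - B)) =
      (1 - A * B) * (1 - t • ((1 - A * B)⁻¹ * A * (D - B))) := by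
    rw [mul_sub, mul_one, mul_smul_comm, mul_assoc _ A, mul_nonsing_inv_cancel_left _ _ hdet,
      mul_add, mul_smul_comm, sub_sub]
  rw [hfac, hAB.mul_left_iff]

end Spectrum

/-! ### The loop matrix -/

section Loop

variable {R : Type*} [CommRing R]

/-- The matrix `[[X, -1], [-1, Y]]` of the closed-loop equations `X z₁ - z₂ = b₁`,
`-z₁ + Y z₂ = b₂`, indexed by `Fin (n + n)` so that it is again a transfer matrix when `X` and `Y`
are. -/
def loop (X Y : Matrix (Fin n) (Fin n) R) : Matrix (Fin (n + n)) (Fin (n + n)) R :=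
  reindexAlgEquiv R R finSumFinEquiv (fromBlocks X (-1) (-1) Y)

variable {X Y : Matrix (Fin n) (Fin n) R}

lemma forall_reindexAlgEquiv_fromBlocks_apply_iff {A B C D : Matrix (Fin n) (Fin n) R}
    {p : R → Prop} :
    (∀ i j, p (reindexAlgEquiv R R finSumFinEquiv (fromBlocks A B C D) i j)) ↔
      (∀ i j, p (A i j)) ∧ (∀ i j, p (B i j)) ∧ (∀ i j, p (C i j)) ∧ ∀ i j, p (D i j) := by
  refine (finSumFinEquiv.symm.surjective.forall₂
    (p := fun i j => p (fromBlocks A B C D i j))).symm.trans ?_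
  simp only [Sum.forall, fromBlocks_apply₁₁, fromBlocks_apply₁₂, fromBlocks_apply₂₁,
    fromBlocks_apply₂₂, forall_and, and_assoc]
  exact and_congr_right' and_left_comm

lemma isUnit_loop_iff : IsUnit (loop X Y) ↔ IsUnit (1 - X * Y) := by
  have hfac : fromBlocks X (-1) (-1) Y = fromBlocks 1 (-X) 0 1 * fromBlocks (1 - X * Y) 0 0 1 *
      (fromBlocks 0 (-1) (-1) 0 * fromBlocks 1 (-Y) 0 1) := by
    simp only [fromBlocks_multiply, mul_zero, zero_mul, mul_one, one_mul, add_zero, zero_add,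
      mul_neg, neg_mul, neg_neg, neg_zero, mul_sub, sub_zero]
    congr 1
    noncomm_ring
  have hflip : IsUnit (fromBlocks 0 (-1) (-1) 0 : Matrix (Fin n ⊕ Fin n) (Fin n ⊕ Fin n) R) := by
    refine IsUnit.of_mul_eq_one (fromBlocks 0 (-1) (-1) 0) ?_
    simp [fromBlocks_multiply]
  have hunip (Z : Matrix (Fin n) (Fin n) R) : IsUnit (fromBlocks 1 Z 0 1) :=
    isUnit_fromBlocks_zero₂₁.2 ⟨isUnit_one, isUnit_one⟩
  rw [loop, isUnit_map_iff, hfac, (hflip.mul (hunip _)).mul_right_iff, (hunip _).mul_left_iff,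
    isUnit_fromBlocks_zero₂₁, and_iff_left isUnit_one]

lemma inv_loop (h : IsUnit (1 - X * Y)) :
    (loop X Y)⁻¹ = reindexAlgEquiv R R finSumFinEquiv
      (fromBlocks (-(Y * (1 - X * Y)⁻¹)) (-(1 + Y * (1 - X * Y)⁻¹ * X))
        (-(1 - X * Y)⁻¹) (-((1 - X * Y)⁻¹ * X))) := by
  have hV : (1 - X * Y)⁻¹ * (X * Y) = (1 - X * Y)⁻¹ - 1 := by
    rw [eq_sub_iff_add_eq, ← eq_sub_iff_add_eq', ← mul_one_sub,
      nonsing_inv_mul _ ((isUnit_iff_isUnit_det _).1 h)]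
  refine Matrix.inv_eq_left_inv ?_
  rw [loop, ← map_mul, ← map_one (reindexAlgEquiv R R finSumFinEquiv), ← fromBlocks_one,
    fromBlocks_multiply]
  congr 2 <;> simp only [neg_mul, mul_neg, neg_neg, mul_one, add_mul, one_mul, mul_assoc, hV,
    mul_sub] <;> abel

lemma loop_mulVec_append (x y : Fin n → R) :
    loop X Y *ᵥ Fin.append x y = Fin.append (X *ᵥ x - y) (Y *ᵥ y - x) := by
  ext i
  refine Fin.addCases (fun i => ?_) (fun i => ?_) i <;>
  simp [loop, mulVec, dotProduct, Fin.sum_univ_add, one_apply, sub_eq_add_neg, add_comm,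
    -Fin.natAdd_eq_addNat]

lemma append_dotProduct_append (x y x' y' : Fin n → R) :
    Fin.append x y ⬝ᵥ Fin.append x' y' = x ⬝ᵥ x' + y ⬝ᵥ y' := by
  simp [dotProduct, Fin.sum_univ_add, -Fin.natAdd_eq_addNat]

lemma star_append [StarRing R] (x y : Fin n → R) :
    star (Fin.append x y) = Fin.append (star x) (star y) := by
  ext i
  refine Fin.addCases (fun i => ?_) (fun i => ?_) i <;> simp [-Fin.natAdd_eq_addNat]

lemma star_append_dotProduct_loop_mulVec [StarRing R] (x y : Fin n → R) :
    star (Fin.append x y) ⬝ᵥ (loop X Y *ᵥ Fin.append x y) = star x ⬝ᵥ (X *ᵥ x) +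
      star y ⬝ᵥ (Y *ᵥ y) - (star x ⬝ᵥ y + star y ⬝ᵥ x) := by
  rw [loop_mulVec_append, star_append, append_dotProduct_append, dotProduct_sub, dotProduct_sub]
  ring

lemma isHermitian_loop [StarRing R] (hX : X.IsHermitian) (hY : Y.IsHermitian) :
    (loop X Y).IsHermitian :=
  (hX.fromBlocks (by simp) hY).submatrix _

lemma map_loop {K : Type*} [CommRing K] {f : R → K} (h0 : f 0 = 0) (h1 : f (-1) = -1) :
    (loop X Y).map f = loop (X.map f) (Y.map f) := by
  have hneg : (-1 : Matrix (Fin n) (Fin n) R).map f = -1 := by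
    ext i j
    by_cases hij : i = j <;> simp [hij, h0, h1]
  ext i j
  simp only [loop, coe_reindexAlgEquiv, reindex_apply, ← submatrix_map, fromBlocks_map, hneg]

lemma forall_loop_apply_iff {p : R → Prop} (h0 : p 0) (h1 : p (-1)) :
    (∀ i j, p (loop X Y i j)) ↔ (∀ i j, p (X i j)) ∧ ∀ i j, p (Y i j) := by
  have hneg (i j : Fin n) : p ((-1 : Matrix (Fin n) (Fin n) R) i j) := by
    by_cases hij : i = j <;> simp [hij, h0, h1]
  rw [loop, forall_reindexAlgEquiv_fromBlocks_apply_iff]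
  simp only [hneg, implies_true, true_and]

lemma loop_add_smul_sub {S : Type*} [Ring S] [Module S R] (t : S)
    (X X' Y Y' : Matrix (Fin n) (Fin n) R) :
    loop (X + t • (X' - X)) (Y + t • (Y' - Y)) = loop X Y + t • (loop X' Y' - loop X Y) := by
  ext i j
  cases hi : finSumFinEquiv.symm i <;> cases hj : finSumFinEquiv.symm j <;> simp [loop, hi, hj]

lemma loop_sub_loop (X X' Y Y' : Matrix (Fin n) (Fin n) R) :
    loop X' Y' - loop X Y =
      reindexAlgEquiv R R finSumFinEquiv (fromBlocks (X' - X) 0 0 (Y' - Y)) := by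
  rw [loop, loop, ← map_sub, sub_eq_add_neg, fromBlocks_neg, fromBlocks_add]
  simp [sub_eq_add_neg]

end Loop

section LoopComplex

variable {X Y X' Y' : Matrix (Fin n) (Fin n) ℂ}

lemma posSemidef_loop_sub_loop (hX : (X' - X).PosSemidef) (hY : (Y' - Y).PosSemidef) :
    (loop X' Y' - loop X Y).PosSemidef := by
  refine .of_dotProduct_mulVec_nonneg ?_ fun v => ?_
  · rw [loop_sub_loop]
    exact (hX.isHermitian.fromBlocks conjTranspose_zero hY.isHermitian).submatrix _
  · rw [← Fin.append_castAdd_natAdd (f := v), sub_mulVec, dotProduct_sub,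
      star_append_dotProduct_loop_mulVec, star_append_dotProduct_loop_mulVec,
      sub_sub_sub_cancel_right, add_sub_add_comm, ← dotProduct_sub, ← dotProduct_sub,
      ← sub_mulVec, ← sub_mulVec]
    exact add_nonneg (hX.dotProduct_mulVec_nonneg _) (hY.dotProduct_mulVec_nonneg _)

lemma im_star_append_dotProduct_loop_mulVec (x y : Fin n → ℂ) :
    (star (Fin.append x y) ⬝ᵥ (loop X Y *ᵥ Fin.append x y)).im =
      (star x ⬝ᵥ (X *ᵥ x)).im + (star y ⬝ᵥ (Y *ᵥ y)).im := by
  have hcross : (star x ⬝ᵥ y + star y ⬝ᵥ x).im = 0 := by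
    rw [star_dotProduct x y, Complex.add_im, Complex.star_def, Complex.conj_im, neg_add_cancel]
  rw [star_append_dotProduct_loop_mulVec, Complex.sub_im, hcross, Complex.add_im, sub_zero]

lemma posSemidef_niKer_loop (hX : (niKer X).PosSemidef) (hY : (niKer Y).PosSemidef) :
    (niKer (loop X Y)).PosSemidef := by
  rw [posSemidef_niKer_iff] at *
  intro v
  rw [← Fin.append_castAdd_natAdd (f := v), im_star_append_dotProduct_loop_mulVec]
  exact add_nonpos (hX _) (hY _)

end LoopComplex

section LoopTransfer

variable {G P C : Matrix (Fin n) (Fin n) (RatFunc ℝ)} {s : ℂ}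

lemma not_hasPole_loop_iff : ¬ HasPole (loop P C) s ↔ ¬ HasPole P s ∧ ¬ HasPole C s := by
  simp only [HasPole, not_exists]
  exact forall_loop_apply_iff (p := fun f => ¬ IsPoleAt f s) (regAt s).zero_mem
    (neg_mem (regAt s).one_mem)

lemma proper_loop (hP : Proper P) (hC : Proper C) : Proper (loop P C) :=
  (forall_loop_apply_iff (p := (· ∈ properFunctions)) properFunctions.zero_mem
    (neg_mem properFunctions.one_mem)).2 ⟨hP, hC⟩

lemma evalM_loop (P C : Matrix (Fin n) (Fin n) (RatFunc ℝ)) (s : ℂ) :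
    evalM (loop P C) s = loop (evalM P s) (evalM C s) :=
  map_loop (map_zero (evalHom s)) ((map_neg (evalHom s) 1).trans (congrArg _ (map_one _)))

lemma evalTop_loop (P C : Matrix (Fin n) (Fin n) (RatFunc ℝ)) :
    evalTop (loop P C) = loop (evalTop P) (evalTop C) :=
  have hmap := map_loop (X := P) (Y := C) (f := fun f => (atInfinity f : ℂ)) (map_zero evalInfHom)
    ((map_neg evalInfHom 1).trans (congrArg _ (map_one _)))
  hmap

lemma smul_loop {R : Type*} [CommRing R] (c : R) (X Y : Matrix (Fin n) (Fin n) R) :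
    c • loop X Y = loop (c • X) (c • Y) - (1 - c) • loop 0 0 := by
  have hsegment := loop_add_smul_sub c 0 X 0 Y
  simp only [sub_zero, zero_add] at hsegment
  rw [hsegment, smul_sub, sub_smul, one_smul]
  abel

lemma continuous_loop : Continuous fun M : Matrix (Fin n) (Fin n) ℂ × Matrix (Fin n) (Fin n) ℂ =>
    loop M.1 M.2 :=
  (Continuous.matrix_fromBlocks continuous_fst continuous_const continuous_const
    continuous_snd).matrix_submatrix _ _

lemma IsNI.exists_residue_I_smul (hG : IsNI G) {ω : ℝ} (hω : 0 < ω) :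
    ∃ R : Matrix (Fin n) (Fin n) ℂ, R.PosSemidef ∧
      Tendsto (fun s => ((s - jw ω) * Complex.I) • evalM G s) (𝓝[≠] jw ω) (𝓝 R) := by
  obtain ⟨R, hR, hlim⟩ := hG.exists_residue (a := jw ω) (by simp [jw]) (by simp [jw, hω.ne'])
  refine ⟨(ω : ℂ) • R, hR.smul (Complex.zero_le_real.2 hω.le), ?_⟩
  have hscaled := hlim.const_smul Complex.I
  have hcoeff : Complex.I * -jw ω = ω := by
    rw [jw, mul_neg, ← mul_assoc, Complex.I_mul_I, neg_one_mul, neg_neg]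
  simp only [smul_smul, hcoeff] at hscaled
  exact hscaled.congr fun s => by rw [mul_comm]

lemma IsNI.loop (hP : IsNI P) (hC : IsNI C) (hP0 : ¬ HasPole P 0) (hC0 : ¬ HasPole C 0) :
    IsNI (loop P C) := by
  refine ⟨proper_loop hP.1 hC.1,
    fun s hs => not_hasPole_loop_iff.2 ⟨hP.2.1 s hs, hC.2.1 s hs⟩, fun ω hω hp => ?_,
    fun ω hω _ => ?_, fun hp => absurd hp (not_hasPole_loop_iff.2 ⟨hP0, hC0⟩)⟩
  · rw [not_hasPole_loop_iff] at hp
    rw [evalM_loop]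
    exact posSemidef_niKer_loop (hP.2.2.1 ω hω hp.1) (hC.2.2.1 ω hω hp.2)
  · obtain ⟨R, hR, hRlim⟩ := hP.exists_residue_I_smul hω
    obtain ⟨S, hS, hSlim⟩ := hC.exists_residue_I_smul hω
    refine ⟨NIControl.loop R S - NIControl.loop 0 0,
      posSemidef_loop_sub_loop (by rwa [sub_zero]) (by rwa [sub_zero]), ?_⟩
    have hcoeff : Tendsto (fun s => 1 - (s - jw ω) * Complex.I) (𝓝[≠] jw ω) (𝓝 1) := by
      have hcont : Continuous fun s => 1 - (s - jw ω) * Complex.I := by fun_prop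
      simpa using (hcont.tendsto (jw ω)).mono_left nhdsWithin_le_nhds
    have hlim := ((continuous_loop.tendsto _).comp (hRlim.prodMk_nhds hSlim)).sub
      (hcoeff.smul_const (NIControl.loop 0 0))
    rw [one_smul] at hlim
    refine hlim.congr fun s => ?_
    rw [Function.comp_apply, ← smul_loop, ← evalM_loop, smul_smul]

end LoopTransfer

/-! ### Stability and the inverse loop matrix -/

/-- The ring `RH∞` of proper real-rational functions without poles in the closed right half
plane. -/
def rhInf : Subalgebra ℝ (RatFunc ℝ) :=
  properFunctions ⊓ ⨅ s : {s : ℂ // 0 ≤ s.re}, regAt s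

section Stability

variable {P C G : Matrix (Fin n) (Fin n) (RatFunc ℝ)}

lemma mem_rhInf_iff {f : RatFunc ℝ} :
    f ∈ rhInf ↔ f.num.degree ≤ f.denom.degree ∧ ∀ s : ℂ, 0 ≤ s.re → ¬ IsPoleAt f s := by
  rw [rhInf, Algebra.mem_inf, Algebra.mem_iInf, Subtype.forall]
  rfl

lemma memRHinf_iff_forall_mem_rhInf {m : Type*} [Fintype m] {G : Matrix m m (RatFunc ℝ)} :
    MemRHinf G ↔ ∀ i j, G i j ∈ rhInf := by
  simp only [MemRHinf, mem_rhInf_iff, forall_and]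
  exact and_congr_right' ⟨fun h i j s hs => h s hs i j, fun h s hs i j => h i j s hs⟩

lemma memRHinf_iff : MemRHinf G ↔ Proper G ∧ ∀ s : ℂ, 0 ≤ s.re → ¬ HasPole G s := by
  simp only [MemRHinf, Proper, HasPole, not_exists]

lemma feedbackStable_iff_memRHinf_inv_loop :
    FeedbackStable P C ↔ IsUnit (loop P C) ∧ MemRHinf (loop P C)⁻¹ := by
  rw [FeedbackStable, ← isUnit_iff_ne_zero, ← isUnit_iff_isUnit_det, ← isUnit_loop_iff]
  refine and_congr_right fun hunit => ?_
  have hone (i j : Fin n) : (1 : Matrix (Fin n) (Fin n) (RatFunc ℝ)) i j ∈ rhInf := by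
    rw [one_apply]
    split_ifs
    exacts [one_mem _, zero_mem _]
  rw [inv_loop (isUnit_loop_iff.1 hunit), memRHinf_iff_forall_mem_rhInf,
    memRHinf_iff_forall_mem_rhInf,
    forall_reindexAlgEquiv_fromBlocks_apply_iff (p := (· ∈ rhInf))]
  simp only [Sum.forall, fromBlocks_apply₁₁, fromBlocks_apply₁₂, fromBlocks_apply₂₁,
    fromBlocks_apply₂₂, forall_and, Matrix.neg_apply, neg_mem_iff, Matrix.add_apply,
    add_mem_cancel_left (hone _ _)]
  tauto

end Stability

section NegInv

variable {M N : Matrix (Fin n) (Fin n) ℂ} {G : Matrix (Fin n) (Fin n) (RatFunc ℝ)}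

lemma posSemidef_niKer_neg_of_mul_eq_one (h : M * N = 1) (hM : (niKer M).PosSemidef) :
    (niKer (-N)).PosSemidef := by
  rw [posSemidef_niKer_iff] at *
  intro v
  have hv : M *ᵥ (N *ᵥ v) = v := by rw [mulVec_mulVec, h, one_mulVec]
  calc (star v ⬝ᵥ (-N *ᵥ v)).im = -(star (M *ᵥ (N *ᵥ v)) ⬝ᵥ (N *ᵥ v)).im := by
        rw [hv, neg_mulVec, dotProduct_neg, Complex.neg_im]
    _ = (star (N *ᵥ v) ⬝ᵥ (M *ᵥ (N *ᵥ v))).im := by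
        rw [star_dotProduct, Complex.star_def, Complex.conj_im, neg_neg]
    _ ≤ 0 := hM _

lemma IsNI.neg_inv (hG : IsNI G) (hunit : IsUnit G) (hinv : MemRHinf G⁻¹) : IsNI (-G⁻¹) := by
  have hreg {s : ℂ} (hs : 0 ≤ s.re) : ¬ HasPole (-G⁻¹) s := not_hasPole_neg (hinv.not_hasPole hs)
  have hre (ω : ℝ) : 0 ≤ (jw ω).re := by simp [jw]
  refine ⟨Proper.neg hinv.1, fun s hs => hreg hs.le, fun ω hω _ => ?_,
    fun ω _ hp => absurd hp (hreg (hre ω)), fun hp => absurd hp (hreg le_rfl)⟩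
  refine isClosed_setOf_posSemidef.mem_of_tendsto ((continuous_niKer.tendsto _).comp
    ((continuousAt_evalM (hreg (hre ω))).tendsto.comp
      ((tendsto_jw_nhdsNE ω).mono_right nhdsWithin_le_nhds))) ?_
  filter_upwards [(tendsto_jw_nhdsNE ω).eventually (eventually_not_hasPole G _),
    eventually_nhdsWithin_of_eventually_nhds (eventually_gt_nhds hω)] with ω' hp hω'
  have hmul := evalM_mul_eq_one hp (hinv.not_hasPole (hre ω'))
    (mul_nonsing_inv _ ((isUnit_iff_isUnit_det _).1 hunit))
  simpa only [Function.comp_apply, evalM_neg (hinv.not_hasPole (hre ω'))] using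
    posSemidef_niKer_neg_of_mul_eq_one hmul (hG.2.2.1 ω' hω' hp)

lemma IsNI.posSemidef_inv_evalTop_sub_inv_evalM_zero (hG : IsNI G) (h0 : ¬ HasPole G 0)
    (hunit : IsUnit G) (hinv : MemRHinf G⁻¹) :
    ((evalTop G)⁻¹ - (evalM G 0)⁻¹).PosSemidef := by
  have hmul : G⁻¹ * G = 1 := nonsing_inv_mul _ ((isUnit_iff_isUnit_det _).1 hunit)
  have hreg : ¬ HasPole G⁻¹ 0 := hinv.not_hasPole le_rfl
  have hneg := (hG.neg_inv hunit hinv).posSemidef_evalM_zero_sub_evalTop (not_hasPole_neg hreg)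
  rwa [evalM_neg hreg, evalTop_neg hinv.1, neg_sub_neg,
    ← Matrix.inv_eq_left_inv (evalM_mul_eq_one hreg h0 hmul),
    ← Matrix.inv_eq_left_inv (evalTop_mul_eq_one hinv.1 hG.1 hmul)] at hneg

end NegInv

/-! ### Regularity on the imaginary axis -/

section AxisRegularity

lemma isBigO_one_of_forall_tendsto_smul_eq_zero {α E : Type*} [NormedAddCommGroup E]
    [NormedSpace ℝ E] [ProperSpace E] {l : Filter α} {f : α → E}
    (h : ∀ (u : Ultrafilter α) (c : α → ℝ) (k : E), ↑u ≤ l → Tendsto c u (𝓝 0) →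
      Tendsto (fun a => c a • f a) u (𝓝 k) → k = 0) :
    f =O[l] (1 : α → ℂ) := by
  by_contra hunbdd
  have hne : (comap (fun a => ‖f a‖) atTop ⊓ l).NeBot := by
    rw [inf_neBot_iff_frequently_left]
    intro p hp
    obtain ⟨M, hM⟩ := eventually_atTop.1 (eventually_comap.1 hp)
    by_contra hrare
    refine hunbdd (.of_bound M ((not_frequently.1 hrare).mono fun a ha => ?_))
    rw [Pi.one_apply, norm_one, mul_one]
    exact le_of_not_ge fun hle => ha (hM _ hle a rfl)
  have hu := Ultrafilter.of_le (comap (fun a => ‖f a‖) atTop ⊓ l)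
  set u := Ultrafilter.of (comap (fun a => ‖f a‖) atTop ⊓ l)
  have hnorm : Tendsto (fun a => ‖f a‖) u atTop := tendsto_comap.mono_left (hu.trans inf_le_left)
  have hsphere : ∀ᶠ a in (u : Filter α), ‖f a‖⁻¹ • f a ∈ Metric.sphere (0 : E) 1 := by
    filter_upwards [hnorm.eventually_gt_atTop 0] with a ha
    rw [mem_sphere_zero_iff_norm, norm_smul, norm_inv, norm_norm, inv_mul_cancel₀ ha.ne']
  obtain ⟨k, hk, hlim⟩ := (isCompact_sphere (0 : E) 1).ultrafilter_le_nhds'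
    (u.map fun a => ‖f a‖⁻¹ • f a) hsphere
  have hk0 := h u _ k (hu.trans inf_le_right) hnorm.inv_tendsto_atTop hlim
  simp [hk0] at hk

section ApproximateKernel

variable {α : Type*} {l : Filter α} [l.NeBot] {X Y : α → Matrix (Fin n) (Fin n) ℂ}
  {Y₀ : Matrix (Fin n) (Fin n) ℂ}

lemma eq_zero_of_tendsto_of_tendsto_loop_equations {x y : α → Fin n → ℂ} {x₀ y₀ : Fin n → ℂ}
    (hX : ∀ᶠ a in l, (niKer (X a)).PosSemidef) (hY : Tendsto Y l (𝓝 Y₀)) (hY₀ : (niKer Y₀).PosDef)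
    (hx : Tendsto x l (𝓝 x₀)) (hy : Tendsto y l (𝓝 y₀))
    (hfst : Tendsto (fun a => X a *ᵥ x a - y a) l (𝓝 0))
    (hsnd : Tendsto (fun a => Y a *ᵥ y a - x a) l (𝓝 0)) : y₀ = 0 := by
  have hpair : Tendsto (fun a => (star (x a) ⬝ᵥ (X a *ᵥ x a - y a) +
      star (y a) ⬝ᵥ (Y a *ᵥ y a - x a)).im) l (𝓝 0) := by
    have hdot : Continuous fun p : (Fin n → ℂ) × (Fin n → ℂ) => star p.1 ⬝ᵥ p.2 := by fun_prop
    have hsum := ((hdot.tendsto (x₀, 0)).comp (hx.prodMk_nhds hfst)).add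
      ((hdot.tendsto (y₀, 0)).comp (hy.prodMk_nhds hsnd))
    rw [dotProduct_zero, dotProduct_zero, add_zero] at hsum
    exact (Complex.continuous_im.tendsto 0).comp hsum
  have hform : 0 ≤ (star y₀ ⬝ᵥ (Y₀ *ᵥ y₀)).im := by
    refine le_of_tendsto_of_tendsto hpair
      ((Complex.continuous_im.tendsto _).comp (tendsto_dotProduct_mulVec hy.star hY hy)) ?_
    filter_upwards [hX] with a ha
    rw [← append_dotProduct_append, ← star_append, ← loop_mulVec_append,
      im_star_append_dotProduct_loop_mulVec]
    exact add_le_of_nonpos_left (posSemidef_niKer_iff.1 ha _)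
  by_contra hne
  have hpos := hY₀.dotProduct_mulVec_pos hne
  rw [star_dotProduct_niKer_mulVec, Complex.zero_lt_real] at hpos
  linarith

lemma eq_zero_of_tendsto_of_tendsto_loop_mulVec {w : α → Fin (n + n) → ℂ} {k : Fin (n + n) → ℂ}
    (hX : ∀ᶠ a in l, (niKer (X a)).PosSemidef) (hY : Tendsto Y l (𝓝 Y₀)) (hY₀ : (niKer Y₀).PosDef)
    (hw : Tendsto w l (𝓝 k)) (hloop : Tendsto (fun a => loop (X a) (Y a) *ᵥ w a) l (𝓝 0)) :
    k = 0 := by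
  let x a i := w a (Fin.castAdd n i)
  let y a i := w a (Fin.natAdd n i)
  have hsplit a : loop (X a) (Y a) *ᵥ w a =
      Fin.append (X a *ᵥ x a - y a) (Y a *ᵥ y a - x a) := by
    rw [← loop_mulVec_append, Fin.append_castAdd_natAdd]
  simp only [hsplit, tendsto_pi_nhds] at hloop hw
  have hx : Tendsto x l (𝓝 fun i => k (Fin.castAdd n i)) := tendsto_pi_nhds.2 fun i => hw _
  have hy : Tendsto y l (𝓝 fun i => k (Fin.natAdd n i)) := tendsto_pi_nhds.2 fun i => hw _
  have hfst : Tendsto (fun a => X a *ᵥ x a - y a) l (𝓝 0) :=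
    tendsto_pi_nhds.2 fun i => (hloop (Fin.castAdd n i)).congr fun a => Fin.append_left _ _ i
  have hsnd : Tendsto (fun a => Y a *ᵥ y a - x a) l (𝓝 0) :=
    tendsto_pi_nhds.2 fun i => (hloop (Fin.natAdd n i)).congr fun a => Fin.append_right _ _ i
  have hy0 := eq_zero_of_tendsto_of_tendsto_loop_equations hX hY hY₀ hx hy hfst hsnd
  have hx0 : (fun i => k (Fin.castAdd n i)) = 0 := by
    have hlim := ((continuous_fst.matrix_mulVec continuous_snd).tendsto _).comp
      (hY.prodMk_nhds hy) |>.sub hx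
    simpa only [hy0, mulVec_zero, zero_sub, neg_eq_zero] using tendsto_nhds_unique hlim hsnd
  exact funext (Fin.addCases (congrFun hx0) (congrFun hy0))

end ApproximateKernel

variable {P C : Matrix (Fin n) (Fin n) (RatFunc ℝ)}

lemma not_hasPole_inv_loop_jw (hP : IsNI P) (hC : IsSNI C) (hunit : IsUnit (loop P C)) {ω : ℝ}
    (hω : 0 < ω) : ¬ HasPole (loop P C)⁻¹ (jw ω) := by
  rintro ⟨i, j, hp⟩
  have hreg (G : Matrix (Fin (n + n)) (Fin (n + n)) (RatFunc ℝ)) :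
      ∀ᶠ ω' in 𝓝[≠] ω, ¬ HasPole G (jw ω') :=
    (tendsto_jw_nhdsNE ω).eventually (eventually_not_hasPole G _)
  have hC_lim : Tendsto (fun ω' => evalM C (jw ω')) (𝓝[≠] ω) (𝓝 (evalM C (jw ω))) :=
    (continuousAt_evalM (hC.1.not_hasPole (by simp [jw]))).tendsto.comp
      ((tendsto_jw_nhdsNE ω).mono_right nhdsWithin_le_nhds)
  have hP_pos : ∀ᶠ ω' in 𝓝[≠] ω, (niKer (evalM P (jw ω'))).PosSemidef := by
    filter_upwards [hreg (loop P C), eventually_nhdsWithin_of_eventually_nhds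
      (eventually_gt_nhds hω)] with ω' hp hω'
    exact hP.2.2.1 ω' hω' (not_hasPole_loop_iff.1 hp).1
  have hsolve : ∀ᶠ ω' in 𝓝[≠] ω, loop (evalM P (jw ω')) (evalM C (jw ω')) *ᵥ
      (evalM (loop P C)⁻¹ (jw ω') *ᵥ Pi.single j 1) = Pi.single j 1 := by
    filter_upwards [hreg (loop P C), hreg (loop P C)⁻¹] with ω' h h'
    rw [← evalM_loop, mulVec_mulVec, evalM_mul_eq_one h h'
      (mul_nonsing_inv _ ((isUnit_iff_isUnit_det _).1 hunit)), one_mulVec]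
  have hbdd : (fun ω' => evalM (loop P C)⁻¹ (jw ω') *ᵥ Pi.single j 1) =O[𝓝[≠] ω] (1 : ℝ → ℂ) := by
    refine isBigO_one_of_forall_tendsto_smul_eq_zero fun u c k hu hc hk => ?_
    refine eq_zero_of_tendsto_of_tendsto_loop_mulVec (hu hP_pos) (hC_lim.mono_left hu)
      (hC.2 ω hω) hk ?_
    have hright : Tendsto (fun ω' => c ω' • (Pi.single j 1 : Fin (n + n) → ℂ)) u (𝓝 0) := by
      simpa using hc.smul_const (Pi.single j 1 : Fin (n + n) → ℂ)
    refine hright.congr' ?_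
    filter_upwards [hu hsolve] with ω' h
    rw [mulVec_smul, h]
  refine not_isPoleAt_of_isBigO_one (tendsto_jw_nhdsNE ω) ?_ hp
  rw [Asymptotics.isBigO_map]
  refine (Asymptotics.isBigO_pi.1 hbdd i).congr_left fun ω' => ?_
  simp [evalM]

end AxisRegularity

/-! ### The stability criterion -/

section Criterion

variable {X₀ X₁ Y₀ Y₁ : Matrix (Fin n) (Fin n) ℂ}

lemma posSemidef_add_smul_sub {t : ℝ} (ht : t ∈ Set.Icc (0 : ℝ) 1) (hX : (X₁ - X₀).PosSemidef) :
    (X₀ + t • (X₁ - X₀) - X₀).PosSemidef ∧ (X₁ - (X₀ + t • (X₁ - X₀))).PosSemidef := by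
  constructor
  · rw [add_sub_cancel_left]
    exact hX.smul ht.1
  · have heq : X₁ - (X₀ + t • (X₁ - X₀)) = (1 - t) • (X₁ - X₀) := by
      rw [sub_smul, one_smul, sub_add_eq_sub_sub]
    rw [heq]
    exact hX.smul (sub_nonneg.2 ht.2)

lemma isUnit_loop_of_posSemidef_inv_sub_inv {X Y : Matrix (Fin n) (Fin n) ℂ}
    (hX₀ : X₀.IsHermitian) (hY₀ : Y₀.IsHermitian)
    (hX : (X - X₀).PosSemidef ∧ (X₁ - X).PosSemidef)
    (hY : (Y - Y₀).PosSemidef ∧ (Y₁ - Y).PosSemidef)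
    (h₀ : IsUnit (loop X₀ Y₀)) (h₁ : IsUnit (loop X₁ Y₁))
    (hinv : ((loop X₀ Y₀)⁻¹ - (loop X₁ Y₁)⁻¹).PosSemidef) : IsUnit (loop X Y) := by
  have hX₁ : X₁.IsHermitian := by
    simpa using (hX₀.add hX.1.isHermitian).add hX.2.isHermitian
  have hY₁ : Y₁.IsHermitian := by
    simpa using (hY₀.add hY.1.isHermitian).add hY.2.isHermitian
  exact isUnit_of_posSemidef_sub_of_posSemidef_inv_sub_inv (isHermitian_loop hX₁ hY₁)
    (isHermitian_loop hX₀ hY₀) h₁ h₀ hinv (posSemidef_loop_sub_loop hX.1 hY.1)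
    (posSemidef_loop_sub_loop hX.2 hY.2)

lemma posSemidef_inv_loop_sub_inv_loop (hX₀ : X₀.IsHermitian) (hY₀ : Y₀.IsHermitian)
    (hX : (X₁ - X₀).PosSemidef) (hY : (Y₁ - Y₀).PosSemidef)
    (h : ∀ t ∈ Set.Icc (0 : ℝ) 1, IsUnit (loop (X₀ + t • (X₁ - X₀)) (Y₀ + t • (Y₁ - Y₀)))) :
    ((loop X₀ Y₀)⁻¹ - (loop X₁ Y₁)⁻¹).PosSemidef := by
  simp only [loop_add_smul_sub] at h
  have hinv := posSemidef_inv_sub_inv_add (isHermitian_loop hX₀ hY₀)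
    (posSemidef_loop_sub_loop hX hY) h
  rwa [add_sub_cancel] at hinv

lemma isUnit_loop_and_posSemidef_inv_sub_inv_iff (hX₀ : X₀.IsHermitian) (hY₀ : Y₀.IsHermitian)
    (hX : (X₁ - X₀).PosSemidef) (hY : (Y₁ - Y₀).PosSemidef) :
    (IsUnit (loop X₀ Y₀) ∧ IsUnit (loop X₁ Y₁) ∧
      ((loop X₀ Y₀)⁻¹ - (loop X₁ Y₁)⁻¹).PosSemidef) ↔
    (∀ t ∈ Set.Icc (0 : ℝ) 1, IsUnit (loop X₀ (Y₀ + t • (Y₁ - Y₀)))) ∧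
      ∀ t ∈ Set.Icc (0 : ℝ) 1, IsUnit (loop (X₀ + t • (X₁ - X₀)) Y₁) := by
  have hrefl (Z : Matrix (Fin n) (Fin n) ℂ) : (Z - Z).PosSemidef := by
    rw [sub_self]; exact .zero
  constructor
  · rintro ⟨h₀, h₁, hinv⟩
    exact ⟨fun t ht => isUnit_loop_of_posSemidef_inv_sub_inv hX₀ hY₀ ⟨hrefl X₀, hX⟩
        (posSemidef_add_smul_sub ht hY) h₀ h₁ hinv,
      fun t ht => isUnit_loop_of_posSemidef_inv_sub_inv hX₀ hY₀ (posSemidef_add_smul_sub ht hX)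
        ⟨hY, hrefl Y₁⟩ h₀ h₁ hinv⟩
  · rintro ⟨hYseg, hXseg⟩
    have hY₁ : Y₁.IsHermitian := by simpa using hY₀.add hY.isHermitian
    have hYinv : ((loop X₀ Y₀)⁻¹ - (loop X₀ Y₁)⁻¹).PosSemidef :=
      posSemidef_inv_loop_sub_inv_loop hX₀ hY₀ (hrefl X₀) hY (by simpa using hYseg)
    have hXinv : ((loop X₀ Y₁)⁻¹ - (loop X₁ Y₁)⁻¹).PosSemidef :=
      posSemidef_inv_loop_sub_inv_loop hX₀ hY₁ hX (hrefl Y₁) (by simpa using hXseg)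
    exact ⟨by simpa using hYseg 0 (by simp), by simpa using hXseg 1 (by simp),
      by simpa using hYinv.add hXinv⟩

lemma forall_isUnit_loop_segments_iff (hX₀ : X₀.IsHermitian) (hY₀ : Y₀.IsHermitian)
    (hX : (X₁ - X₀).PosSemidef) (hY : (Y₁ - Y₀).PosSemidef) :
    ((∀ t ∈ Set.Icc (0 : ℝ) 1, IsUnit (loop X₀ (Y₀ + t • (Y₁ - Y₀)))) ∧
      ∀ t ∈ Set.Icc (0 : ℝ) 1, IsUnit (loop (X₀ + t • (X₁ - X₀)) Y₁)) ↔
    IsUnit (1 - X₀ * Y₀) ∧ eigsRealAndLT ((1 - X₀ * Y₀)⁻¹ * (X₀ * Y₁ - 1)) 0 ∧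
      eigsRealAndLT ((1 - Y₁ * X₀)⁻¹ * (Y₁ * X₁ - 1)) 0 := by
  have hY₁ : Y₁.IsHermitian := by simpa using hY₀.add hY.isHermitian
  have hcomm (X : Matrix (Fin n) (Fin n) ℂ) : IsUnit (1 - X * Y₁) ↔ IsUnit (1 - Y₁ * X) := by
    rw [isUnit_iff_isUnit_det, isUnit_iff_isUnit_det, det_one_sub_mul_comm]
  simp only [isUnit_loop_iff, hcomm]
  constructor
  · rintro ⟨hYseg, hXseg⟩
    have h₀ : IsUnit (1 - X₀ * Y₀) := by simpa using hYseg 0 (by simp)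
    have h₁ : IsUnit (1 - Y₁ * X₀) := by simpa using hXseg 0 (by simp)
    exact ⟨h₀, (eigsRealAndLT_inv_mul_iff hX₀ hY₀ hY h₀).2 hYseg,
      (eigsRealAndLT_inv_mul_iff hY₁ hX₀ hX h₁).2 hXseg⟩
  · rintro ⟨h₀, hb, hc⟩
    have hYseg := (eigsRealAndLT_inv_mul_iff hX₀ hY₀ hY h₀).1 hb
    have h₁ : IsUnit (1 - Y₁ * X₀) := by simpa [hcomm] using hYseg 1 (by simp)
    exact ⟨hYseg, (eigsRealAndLT_inv_mul_iff hY₁ hX₀ hX h₁).1 hc⟩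

end Criterion

section FeedbackStability

variable {P C G : Matrix (Fin n) (Fin n) (RatFunc ℝ)} {s : ℂ}

lemma IsNI.isUnit_evalM_of_posSemidef_inv_sub_inv (hG : IsNI G) (h0 : ¬ HasPole G 0)
    (hs : 0 < s.re) (hunit_top : IsUnit (evalTop G)) (hunit_zero : IsUnit (evalM G 0))
    (hinv : ((evalTop G)⁻¹ - (evalM G 0)⁻¹).PosSemidef) : IsUnit (evalM G s) := by
  rw [← mulVec_injective_iff_isUnit]
  refine (injective_iff_map_eq_zero (evalM G s).mulVecLin).2 fun z hz => ?_
  exact eq_zero_of_posSemidef_inv_sub_inv (hG.isHermitian_evalM_zero h0)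
    hG.isHermitian_evalTop hunit_zero hunit_top hinv
    (hG.re_evalTop_le_of_evalM_mulVec_eq_zero h0 hs hz)

lemma memRHinf_inv_loop (hP : IsNI P) (hP0 : ¬ HasPole P 0) (hC : IsSNI C)
    (hunit_top : IsUnit (evalTop (loop P C))) (hunit_zero : IsUnit (evalM (loop P C) 0))
    (hinv : ((evalTop (loop P C))⁻¹ - (evalM (loop P C) 0)⁻¹).PosSemidef) :
    MemRHinf (loop P C)⁻¹ := by
  have hC0 : ¬ HasPole C 0 := hC.1.not_hasPole le_rfl
  have hL := hP.loop hC.isNI hP0 hC0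
  have hL0 : ¬ HasPole (loop P C) 0 := not_hasPole_loop_iff.2 ⟨hP0, hC0⟩
  have hunit : IsUnit (loop P C) := isUnit_of_isUnit_evalM hL0 hunit_zero
  refine memRHinf_iff.2 ⟨hL.1.inv hunit_top, fun s hs => ?_⟩
  rcases hs.lt_or_eq with hpos | haxis
  · exact not_hasPole_inv (hL.2.1 s hpos)
      (hL.isUnit_evalM_of_posSemidef_inv_sub_inv hL0 hpos hunit_top hunit_zero hinv)
  rw [← jw_im_eq haxis.symm]
  rcases lt_trichotomy s.im 0 with hneg | hzero | hpos
  · rw [← hasPole_conj]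
    have hconj : (starRingEnd ℂ) (jw s.im) = jw (-s.im) := by simp [jw]
    exact hconj ▸ not_hasPole_inv_loop_jw hP hC hunit (neg_pos.2 hneg)
  · rw [hzero, show jw 0 = 0 by simp [jw]]
    exact not_hasPole_inv hL0 hunit_zero
  · exact not_hasPole_inv_loop_jw hP hC hunit hpos

lemma feedbackStable_iff_posSemidef_inv_sub_inv (hP : IsNI P) (hP0 : ¬ HasPole P 0)
    (hC : IsSNI C) :
    FeedbackStable P C ↔ IsUnit (evalTop (loop P C)) ∧ IsUnit (evalM (loop P C) 0) ∧
      ((evalTop (loop P C))⁻¹ - (evalM (loop P C) 0)⁻¹).PosSemidef := by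
  have hC0 : ¬ HasPole C 0 := hC.1.not_hasPole le_rfl
  have hL := hP.loop hC.isNI hP0 hC0
  have hL0 : ¬ HasPole (loop P C) 0 := not_hasPole_loop_iff.2 ⟨hP0, hC0⟩
  rw [feedbackStable_iff_memRHinf_inv_loop]
  constructor
  · rintro ⟨hunit, hinv⟩
    have hmul := mul_nonsing_inv _ ((isUnit_iff_isUnit_det _).1 hunit)
    exact ⟨.of_mul_eq_one _ (evalTop_mul_eq_one hL.1 hinv.1 hmul),
      .of_mul_eq_one _ (evalM_mul_eq_one hL0 (hinv.not_hasPole le_rfl) hmul),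
      hL.posSemidef_inv_evalTop_sub_inv_evalM_zero hL0 hunit hinv⟩
  · rintro ⟨hunit_top, hunit_zero, hinv⟩
    exact ⟨isUnit_of_isUnit_evalM hL0 hunit_zero,
      memRHinf_inv_loop hP hP0 hC hunit_top hunit_zero hinv⟩

end FeedbackStability

section Complexification

lemma isUnit_one_sub_evalTop_mul_iff {P C : Matrix (Fin n) (Fin n) (RatFunc ℝ)} :
    IsUnit (1 - evalTop P * evalTop C) ↔ (1 - evalInf P * evalInf C).det ≠ 0 := by
  rw [← isUnit_mapMatrix_iff Complex.ofRealHom, map_sub, map_one, map_mul]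
  rfl

lemma maxEigLT_inv_mul_iff {A B D : Matrix (Fin n) (Fin n) ℝ} {c : ℝ} :
    maxEigLT ((1 - A * B)⁻¹ * (A * D - 1)) c ↔
      eigsRealAndLT ((1 - A.map Complex.ofReal * B.map Complex.ofReal)⁻¹ *
        (A.map Complex.ofReal * D.map Complex.ofReal - 1)) c := by
  change eigsRealAndLT (Complex.ofRealHom.mapMatrix _) c ↔ _
  rw [map_mul, mapMatrix_inv, map_sub, map_sub, map_one, map_mul, map_mul]
  rfl

end Complexification

/-- feedback stability of an NI plant (no origin poles) with an
SNI controller, first set of necessary and sufficient conditions. -/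
theorem feedback_stability_iff_v1 {n : ℕ} (P C : Matrix (Fin n) (Fin n) (RatFunc ℝ))
    (hP : IsNI P) (hP0 : ¬ HasPole P 0) (hC : IsSNI C) :
    FeedbackStable P C ↔
      ((1 - evalInf P * evalInf C).det ≠ 0 ∧
       maxEigLT ((1 - evalInf P * evalInf C)⁻¹ * (evalInf P * evalR C 0 - 1)) 0 ∧
       maxEigLT ((1 - evalR C 0 * evalInf P)⁻¹ * (evalR C 0 * evalR P 0 - 1)) 0) := by
  have hC0 : ¬ HasPole C 0 := hC.1.not_hasPole le_rfl
  have hP_top := hP.isHermitian_evalTop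
  have hC_top := hC.isNI.isHermitian_evalTop
  have hP_le := hP.posSemidef_evalM_zero_sub_evalTop hP0
  have hC_le := hC.isNI.posSemidef_evalM_zero_sub_evalTop hC0
  have hP_zero : (evalR P 0).map Complex.ofReal = evalM P 0 := by simp [evalR_map_ofReal]
  have hC_zero : (evalR C 0).map Complex.ofReal = evalM C 0 := by simp [evalR_map_ofReal]
  rw [feedbackStable_iff_posSemidef_inv_sub_inv hP hP0 hC, evalTop_loop, evalM_loop,
    isUnit_loop_and_posSemidef_inv_sub_inv_iff hP_top hC_top hP_le hC_le,
    forall_isUnit_loop_segments_iff hP_top hC_top hP_le hC_le, isUnit_one_sub_evalTop_mul_iff,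
    maxEigLT_inv_mul_iff, maxEigLT_inv_mul_iff, hP_zero, hC_zero]
  rfl

end NIControl
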